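/- arXiv:1710.10484 — 3 statements merged into one kernel-verified Lean document; each statement's English description precedes it below -/
import Mathlib

section
/- Let α ∈ [0,1) and let k ≥ 4 be an integer. If p ≥ q + 2 and q ≥ 1, then ρ_α(B_{k,p,q}) < ρ_α(B_{k,p−1,q+1}). -/
/-!
The eigenvalue equations of `A_α(B_{k,p,q})` are solved along the two pendant paths, so that the
comparison of the two graphs becomes a concavity statement about one sequence.

Put `ρ = ρ_α(B_{k,p,q})`, `β = α/(1-α)`, `s = (ρ-2α)/(1-α)`, `R = (ρ-α(k-1))/(1-α)`. Along a path,
counted from its free end, an eigenvector is a multiple of the sequence `f₀ = -β`, `f₁ = 1`,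
`f_{m+2} = s f_{m+1} - f_m` (`pathSeq`). If `S` is the sum of its entries over the `k - 2` common
clique vertices, the root of a path on `m` vertices has the value `S φ(m)`, where
`φ(m) = f_m / h_m` and `h_m = R f_m - f_{m-1}` (`rootDen`). Summing the equations over the common
clique vertices gives `R = (k-3) + (k-2)(φ(p) + φ(q))` (`rho_equation`).

Test vectors give `ρ > 2` and `R ≥ 1` (`two_lt_rho`, `core_le_rho`); hence `f` is increasing, and
`h` is positive and strictly increasing. Since `f_{m+1}² - f_{m+2} f_m` is a positive constant `K`,
`φ(m+1) - φ(m) = K / (h_m h_{m+1})` is strictly decreasing in `m`, so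
`φ(p) + φ(q) < φ(p-1) + φ(q+1)` (`ratio_lt`). Therefore the vector on `B_{k,p-1,q+1}` that satisfies
the equations for `ρ` at all vertices outside the common clique part satisfies `A_α z ≥ ρ z` with
strict inequality there, and the Rayleigh quotient gives `ρ < ρ_α(B_{k,p-1,q+1})`
(`lt_rho_of_ratio`).
-/

/-- The spectral radius (largest eigenvalue) of a real symmetric matrix, as the
supremum of its set of real eigenvalues. -/
noncomputable def specRad {n : Type*} [Fintype n] (M : Matrix n n ℝ) : ℝ :=
  sSup {t : ℝ | ∃ v : n → ℝ, v ≠ 0 ∧ M.mulVec v = t • v}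

/-- The matrix `A_α(G) = α·D(G) + (1-α)·A(G)`. -/
noncomputable def Aalpha {V : Type*} [Fintype V] [DecidableEq V]
    (α : ℝ) (G : SimpleGraph V) : Matrix V V ℝ :=
  letI := Classical.decRel G.Adj
  α • Matrix.diagonal (fun v => (G.degree v : ℝ)) + (1 - α) • G.adjMatrix ℝ

/-- The `α`-index `ρ_α(G)`: the spectral radius of `A_α(G)`. -/
noncomputable def rhoAlpha {V : Type*} [Fintype V] [DecidableEq V]
    (α : ℝ) (G : SimpleGraph V) : ℝ :=
  specRad (Aalpha α G)

/-- The bug graph `B_{p,q,r}`: the complete graph `K_p` minus an edge `{u,v}`, with a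
path on `q` vertices attached at `u` and a path on `r` vertices attached at `v`
(attaching means identifying one end of the path with the root, so `B_{p,q,r}` has
`p+q+r-2` vertices). Vertices `0,…,q-1` form the first path (with `u = q-1`),
vertices `q-1,…,q+p-2` form the clique with the edge `{q-1, q+p-2}` removed, and
vertices `q+p-2,…,p+q+r-3` form the second path (with `v = q+p-2`). -/
def bugGraph (p q r : ℕ) : SimpleGraph (Fin (p + q + r - 2)) :=
  SimpleGraph.fromRel (fun i j =>
    (i.val + 1 = j.val ∧ j.val ≤ q - 1) ∨
    (q - 1 ≤ i.val ∧ i.val ≤ q + p - 2 ∧ q - 1 ≤ j.val ∧ j.val ≤ q + p - 2 ∧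
      ¬(i.val = q - 1 ∧ j.val = q + p - 2) ∧ ¬(j.val = q - 1 ∧ i.val = q + p - 2)) ∨
    (i.val + 1 = j.val ∧ q + p - 2 ≤ i.val))

/-! ### Spectral radius of a symmetric matrix -/

/-- The supremum in `specRad` is over a finite nonempty set, hence attained. -/
lemma exists_eigenvector_specRad {n : Type*} [Fintype n] [DecidableEq n] [Nonempty n]
    {M : Matrix n n ℝ} (hM : M.IsHermitian) :
    (∃ v : n → ℝ, v ≠ 0 ∧ M.mulVec v = specRad M • v) ∧
      ∀ t : ℝ, (∃ v : n → ℝ, v ≠ 0 ∧ M.mulVec v = t • v) → t ≤ specRad M := by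
  have hfin : {t : ℝ | ∃ v : n → ℝ, v ≠ 0 ∧ M.mulVec v = t • v}.Finite := by
    refine (Module.End.finite_hasEigenvalue (Matrix.toLin' M)).subset ?_
    rintro t ⟨v, hv, h⟩
    exact Module.End.hasEigenvalue_of_hasEigenvector (x := v)
      ⟨Module.End.mem_eigenspace_iff.2 (by simpa using h), hv⟩
  have hne : {t : ℝ | ∃ v : n → ℝ, v ≠ 0 ∧ M.mulVec v = t • v}.Nonempty := by
    obtain ⟨j⟩ := ‹Nonempty n›
    refine ⟨hM.eigenvalues j, _, ?_, hM.mulVec_eigenvectorBasis j⟩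
    intro h
    apply hM.eigenvectorBasis.orthonormal.ne_zero j
    ext i
    exact congrFun h i
  exact ⟨hne.csSup_mem hfin, fun t ht => le_csSup hfin.bddAbove ht⟩

lemma rayleigh_le_specRad {n : Type*} [Fintype n] [DecidableEq n] [Nonempty n]
    {M : Matrix n n ℝ} (hM : M.IsHermitian) (z : n → ℝ) :
    z ⬝ᵥ M.mulVec z ≤ specRad M * (z ⬝ᵥ z) := by
  have hH : (specRad M • (1 : Matrix n n ℝ) - M).IsHermitian := by
    refine Matrix.IsHermitian.sub ?_ hM
    ext i j
    by_cases h : i = j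
    · subst h; simp
    · simp [Matrix.one_apply_ne h, Matrix.one_apply_ne (Ne.symm h)]
  have hpsd : (specRad M • (1 : Matrix n n ℝ) - M).PosSemidef := by
    rw [hH.posSemidef_iff_eigenvalues_nonneg]
    intro j
    have h1 := hH.mulVec_eigenvectorBasis j
    have h2 := (exists_eigenvector_specRad hM).2 (specRad M - hH.eigenvalues j)
      ⟨(hH.eigenvectorBasis j).ofLp, ?_, ?_⟩
    · simpa using h2
    · intro h
      apply hH.eigenvectorBasis.orthonormal.ne_zero j
      ext i
      exact congrFun h i
    · rw [Matrix.sub_mulVec, Matrix.smul_mulVec, Matrix.one_mulVec] at h1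
      rw [sub_smul, ← h1]
      abel
  have := hpsd.dotProduct_mulVec_nonneg z
  rw [Matrix.sub_mulVec, Matrix.smul_mulVec, Matrix.one_mulVec, dotProduct_sub,
    dotProduct_smul] at this
  simpa using this

/-! ### The matrix `A_α` of a bug graph -/

lemma isHermitian_Aalpha {V : Type*} [Fintype V] [DecidableEq V] (α : ℝ) (G : SimpleGraph V) :
    (Aalpha α G).IsHermitian := by
  classical
  ext i j
  by_cases h : i = j
  · subst h; simp
  · simp [Aalpha, Matrix.diagonal_apply_ne _ h, Matrix.diagonal_apply_ne _ (Ne.symm h),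
      SimpleGraph.adjMatrix_apply, SimpleGraph.adj_comm]

lemma Aalpha_mulVec {V : Type*} [Fintype V] [DecidableEq V] (α : ℝ) (G : SimpleGraph V)
    [DecidableRel G.Adj] (z : V → ℝ) (i : V) :
    (Aalpha α G).mulVec z i = ∑ j, if G.Adj i j then α * z i + (1 - α) * z j else 0 := by
  have h : Aalpha α G = α • Matrix.diagonal (fun v => (G.degree v : ℝ)) +
      (1 - α) • G.adjMatrix ℝ := by
    unfold Aalpha
    congr!
  rw [h, Matrix.add_mulVec, Matrix.smul_mulVec, Matrix.smul_mulVec]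
  simp only [Pi.add_apply, Pi.smul_apply, Matrix.mulVec_diagonal,
    SimpleGraph.adjMatrix_mulVec_apply, smul_eq_mul]
  rw [← Finset.sum_filter, Finset.sum_add_distrib, Finset.sum_const, ← Finset.mul_sum,
    ← SimpleGraph.neighborFinset_eq_filter, SimpleGraph.card_neighborFinset_eq_degree]
  simp only [nsmul_eq_mul]
  ring

/-- Adjacency in the bug graph with clique `K_k` and left path on `P` vertices, with vertex `i` at
position `i + 1`. The left path is prolonged to the phantom position `0` and the right path is
prolonged indefinitely; `u` is at position `P`, `v` at position `P + k - 1`, and the `k - 2` common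
clique vertices (the core) are at the positions strictly in between. -/
def AdjE (k P m j : ℕ) : Prop :=
  m ≠ j ∧ (((m + 1 = j ∨ j + 1 = m) ∧ m ≤ P ∧ j ≤ P) ∨
    (P ≤ m ∧ m ≤ P + k - 1 ∧ P ≤ j ∧ j ≤ P + k - 1 ∧
      ¬ (m = P ∧ j = P + k - 1) ∧ ¬ (j = P ∧ m = P + k - 1)) ∨
    ((m + 1 = j ∨ j + 1 = m) ∧ P + k - 1 ≤ m ∧ P + k - 1 ≤ j))

/-- `∑ (α Z_m + (1 - α) Z_j)` over the neighbours `j` of position `m` for `AdjE`, in closed form.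
The phantom neighbours of the two path ends are counted, so that this is `A_α Z` only for `Z` such
that their contribution vanishes (see `mulVec_bug`). -/
noncomputable def bugOp (α : ℝ) (k P : ℕ) (Z : ℕ → ℝ) (m : ℕ) : ℝ :=
  if m < P ∨ P + k - 1 < m then 2 * α * Z m + (1 - α) * (Z (m - 1) + Z (m + 1))
  else if m = P then
    α * (k - 1) * Z m + (1 - α) * (Z (m - 1) + ∑ j ∈ Finset.Ioo P (P + k - 1), Z j)
  else if m = P + k - 1 then
    α * (k - 1) * Z m + (1 - α) * (Z (m + 1) + ∑ j ∈ Finset.Ioo P (P + k - 1), Z j)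
  else α * (k - 1) * Z m +
    (1 - α) * (Z P + Z (P + k - 1) + ∑ j ∈ Finset.Ioo P (P + k - 1), Z j - Z m)

lemma card_Ioo_cast {k P : ℕ} (hk : 4 ≤ k) :
    (((Finset.Ioo P (P + k - 1)).card : ℕ) : ℝ) = k - 2 := by
  rw [Nat.card_Ioo, show P + k - 1 - P - 1 = k - 2 by omega, Nat.cast_sub (by omega)]
  norm_num

open Classical in
lemma sum_AdjE (α : ℝ) {k P N : ℕ} (hk : 4 ≤ k) (hN : P + k - 1 ≤ N)
    (Z : ℕ → ℝ) (m : ℕ) (hm : 1 ≤ m) (hmN : m ≤ N) :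
    ∑ j ∈ Finset.range (N + 2), (if AdjE k P m j then α * Z m + (1 - α) * Z j else 0)
      = bugOp α k P Z m := by
  have hcard := card_Ioo_cast (P := P) hk
  rw [← Finset.sum_filter]
  unfold bugOp
  split_ifs with h1 h2 h3
  · have : (Finset.range (N + 2)).filter (AdjE k P m) = {m - 1, m + 1} := by
      ext j
      simp only [AdjE, Finset.mem_filter, Finset.mem_range, Finset.mem_insert,
        Finset.mem_singleton]
      omega
    rw [this, Finset.sum_pair (by omega)]
    ring
  · have : (Finset.range (N + 2)).filter (AdjE k P m) =
        insert (m - 1) (Finset.Ioo P (P + k - 1)) := by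
      ext j
      simp only [AdjE, Finset.mem_filter, Finset.mem_range, Finset.mem_insert, Finset.mem_Ioo]
      omega
    rw [this, Finset.sum_insert (by simp only [Finset.mem_Ioo]; omega), Finset.sum_add_distrib,
      Finset.sum_const, nsmul_eq_mul, hcard, ← Finset.mul_sum]
    ring
  · have : (Finset.range (N + 2)).filter (AdjE k P m) =
        insert (m + 1) (Finset.Ioo P (P + k - 1)) := by
      ext j
      simp only [AdjE, Finset.mem_filter, Finset.mem_range, Finset.mem_insert, Finset.mem_Ioo]
      omega
    rw [this, Finset.sum_insert (by simp only [Finset.mem_Ioo]; omega), Finset.sum_add_distrib,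
      Finset.sum_const, nsmul_eq_mul, hcard, ← Finset.mul_sum]
    ring
  · have hmem : m ∈ Finset.Ioo P (P + k - 1) := by simp only [Finset.mem_Ioo]; omega
    have : (Finset.range (N + 2)).filter (AdjE k P m) =
        insert P (insert (P + k - 1) ((Finset.Ioo P (P + k - 1)).erase m)) := by
      ext j
      simp only [AdjE, Finset.mem_filter, Finset.mem_range, Finset.mem_insert, Finset.mem_Ioo,
        Finset.mem_erase]
      omega
    have hc : ((((Finset.Ioo P (P + k - 1)).erase m).card : ℕ) : ℝ) = k - 3 := by
      rw [Finset.card_erase_of_mem hmem, Nat.card_Ioo,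
        show P + k - 1 - P - 1 - 1 = k - 3 by omega, Nat.cast_sub (by omega)]
      norm_num
    have hs := Finset.add_sum_erase _ Z hmem
    rw [this, Finset.sum_insert, Finset.sum_insert, Finset.sum_add_distrib,
      Finset.sum_const, nsmul_eq_mul, hc, ← Finset.mul_sum, ← hs]
    · ring
    · simp
    · simp only [Finset.mem_insert, Finset.mem_erase, Finset.mem_Ioo]; omega

/-- If the two phantom values, at the positions `0` and `k + P + Q - 1`, make the phantom edges
contribute zero, then `bugOp` computes `A_α` of the bug graph. This spares a separate treatment of
the path ends, and of the case of a path with a single vertex. -/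
lemma mulVec_bug (α : ℝ) {k P Q : ℕ} (hk : 4 ≤ k) (hP : 1 ≤ P) (hQ : 1 ≤ Q) (Z : ℕ → ℝ)
    (h0 : α * Z 1 + (1 - α) * Z 0 = 0)
    (hN : α * Z (k + P + Q - 2) + (1 - α) * Z (k + P + Q - 2 + 1) = 0)
    (i : Fin (k + P + Q - 2)) :
    (Aalpha α (bugGraph k P Q)).mulVec (fun j => Z (j + 1)) i = bugOp α k P Z (i + 1) := by
  classical
  have hi := i.2
  rw [Aalpha_mulVec, ← sum_AdjE α hk (N := k + P + Q - 2) (by omega) Z (i + 1) (by omega)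
    (by omega), Finset.sum_range_succ, Finset.sum_range_succ', ← Fin.sum_univ_eq_sum_range
    (fun j => if AdjE k P (i + 1) (j + 1) then α * Z (i + 1) + (1 - α) * Z (j + 1) else 0)]
  have e0 : (if AdjE k P (i + 1) 0 then α * Z (i + 1) + (1 - α) * Z 0 else 0) = 0 := by
    split_ifs with h
    · have : (i : ℕ) = 0 := by unfold AdjE at h; omega
      simpa [this] using h0
    · rfl
  have e1 : (if AdjE k P (i + 1) (k + P + Q - 2 + 1) then
      α * Z (i + 1) + (1 - α) * Z (k + P + Q - 2 + 1) else 0) = 0 := by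
    split_ifs with h
    · have : (i : ℕ) + 1 = k + P + Q - 2 := by unfold AdjE at h; omega
      rw [this]; exact hN
    · rfl
  rw [e0, e1, add_zero, add_zero]
  refine Finset.sum_congr rfl fun j _ => ?_
  have hj := j.2
  have : (bugGraph k P Q).Adj i j ↔ AdjE k P (i + 1) (j + 1) := by
    rw [bugGraph, SimpleGraph.fromRel_adj, AdjE, ne_eq, Fin.ext_iff]
    omega
  simp only [this]

lemma sum_mul_bugOp_le {α : ℝ} {k P Q : ℕ} (hk : 4 ≤ k) (hP : 1 ≤ P) (hQ : 1 ≤ Q)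
    (Z : ℕ → ℝ) (h0 : α * Z 1 + (1 - α) * Z 0 = 0)
    (hN : α * Z (k + P + Q - 2) + (1 - α) * Z (k + P + Q - 2 + 1) = 0) :
    ∑ i : Fin (k + P + Q - 2), Z (i + 1) * bugOp α k P Z (i + 1) ≤
      rhoAlpha α (bugGraph k P Q) * ∑ i : Fin (k + P + Q - 2), Z (i + 1) * Z (i + 1) := by
  have : Nonempty (Fin (k + P + Q - 2)) := ⟨⟨0, by omega⟩⟩
  have h := rayleigh_le_specRad (isHermitian_Aalpha α (bugGraph k P Q))
    (fun j : Fin (k + P + Q - 2) => Z (j + 1))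
  simp only [dotProduct, mulVec_bug α hk hP hQ Z h0 hN] at h
  exact h

/-- A nonnegative vector with `t Z ≤ A_α Z` forces `t ≤ ρ_α`. Position `P + 1` belongs to the
core. -/
lemma le_rho {α : ℝ} {k P Q : ℕ} (hk : 4 ≤ k) (hP : 1 ≤ P) (hQ : 1 ≤ Q)
    (Z : ℕ → ℝ) (h0 : α * Z 1 + (1 - α) * Z 0 = 0)
    (hN : α * Z (k + P + Q - 2) + (1 - α) * Z (k + P + Q - 2 + 1) = 0) (t : ℝ)
    (hnn : ∀ m, 1 ≤ m → m ≤ k + P + Q - 2 → 0 ≤ Z m)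
    (hsub : ∀ m, 1 ≤ m → m ≤ k + P + Q - 2 → t * Z m ≤ bugOp α k P Z m)
    (hpos : 0 < Z (P + 1)) : t ≤ rhoAlpha α (bugGraph k P Q) := by
  have h := sum_mul_bugOp_le hk hP hQ Z h0 hN
  have hS : 0 < ∑ i : Fin (k + P + Q - 2), Z (i + 1) * Z (i + 1) :=
    Finset.sum_pos' (fun i _ => mul_self_nonneg _)
      ⟨⟨P, by omega⟩, Finset.mem_univ _, mul_pos hpos hpos⟩
  have h2 : t * ∑ i : Fin (k + P + Q - 2), Z (i + 1) * Z (i + 1) ≤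
      ∑ i : Fin (k + P + Q - 2), Z (i + 1) * bugOp α k P Z (i + 1) := by
    rw [Finset.mul_sum]
    refine Finset.sum_le_sum fun i _ => ?_
    have hi := i.2
    nlinarith [mul_le_mul_of_nonneg_left (hsub (i + 1) (by omega) (by omega))
      (hnn (i + 1) (by omega) (by omega))]
  exact le_of_mul_le_mul_right (h2.trans h) hS

/-- Strict version of `le_rho`: the inequality `t Z ≤ A_α Z` is strict at the core position
`P + 1`. -/
lemma lt_rho {α : ℝ} {k P Q : ℕ} (hk : 4 ≤ k) (hP : 1 ≤ P) (hQ : 1 ≤ Q)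
    (Z : ℕ → ℝ) (h0 : α * Z 1 + (1 - α) * Z 0 = 0)
    (hN : α * Z (k + P + Q - 2) + (1 - α) * Z (k + P + Q - 2 + 1) = 0) (t : ℝ)
    (hnn : ∀ m, 1 ≤ m → m ≤ k + P + Q - 2 → 0 ≤ Z m)
    (hsub : ∀ m, 1 ≤ m → m ≤ k + P + Q - 2 → t * Z m ≤ bugOp α k P Z m)
    (hpos : 0 < Z (P + 1)) (hlt : t * Z (P + 1) < bugOp α k P Z (P + 1)) :
    t < rhoAlpha α (bugGraph k P Q) := by
  have h := sum_mul_bugOp_le hk hP hQ Z h0 hN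
  have hS : 0 < ∑ i : Fin (k + P + Q - 2), Z (i + 1) * Z (i + 1) :=
    Finset.sum_pos' (fun i _ => mul_self_nonneg _)
      ⟨⟨P, by omega⟩, Finset.mem_univ _, mul_pos hpos hpos⟩
  have h2 : t * ∑ i : Fin (k + P + Q - 2), Z (i + 1) * Z (i + 1) <
      ∑ i : Fin (k + P + Q - 2), Z (i + 1) * bugOp α k P Z (i + 1) := by
    rw [Finset.mul_sum]
    refine Finset.sum_lt_sum (fun i _ => ?_) ⟨⟨P, by omega⟩, Finset.mem_univ _, ?_⟩
    · have hi := i.2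
      nlinarith [mul_le_mul_of_nonneg_left (hsub (i + 1) (by omega) (by omega))
        (hnn (i + 1) (by omega) (by omega))]
    · have := mul_lt_mul_of_pos_left hlt hpos
      simp only
      linarith
  exact lt_of_mul_lt_mul_right (h2.trans_le h) hS.le

lemma bugOp_path (α : ℝ) {k P : ℕ} (Z : ℕ → ℝ) {m : ℕ} (h : m < P ∨ P + k - 1 < m) :
    bugOp α k P Z m = 2 * α * Z m + (1 - α) * (Z (m - 1) + Z (m + 1)) := by
  rw [bugOp, if_pos h]

lemma bugOp_left (α : ℝ) {k P : ℕ} (hk : 4 ≤ k) (Z : ℕ → ℝ) :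
    bugOp α k P Z P = α * (k - 1) * Z P +
      (1 - α) * (Z (P - 1) + ∑ j ∈ Finset.Ioo P (P + k - 1), Z j) := by
  rw [bugOp, if_neg (by omega), if_pos rfl]

lemma bugOp_right (α : ℝ) {k P : ℕ} (hk : 4 ≤ k) (Z : ℕ → ℝ) :
    bugOp α k P Z (P + k - 1) = α * (k - 1) * Z (P + k - 1) +
      (1 - α) * (Z (P + k - 1 + 1) + ∑ j ∈ Finset.Ioo P (P + k - 1), Z j) := by
  rw [bugOp, if_neg (by omega), if_neg (by omega), if_pos rfl]

lemma bugOp_core (α : ℝ) {k P : ℕ} (Z : ℕ → ℝ) {m : ℕ} (h : P < m) (h' : m < P + k - 1) :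
    bugOp α k P Z m = α * (k - 1) * Z m +
      (1 - α) * (Z P + Z (P + k - 1) + ∑ j ∈ Finset.Ioo P (P + k - 1), Z j - Z m) := by
  rw [bugOp, if_neg (by omega), if_neg (by omega), if_neg (by omega)]

lemma sum_core_const {k P : ℕ} (hk : 4 ≤ k) {Z : ℕ → ℝ}
    (h : ∀ m, P < m → m < P + k - 1 → Z m = 1) :
    ∑ j ∈ Finset.Ioo P (P + k - 1), Z j = k - 2 := by
  rw [Finset.sum_congr rfl (g := fun _ => (1 : ℝ)), Finset.sum_const, nsmul_eq_mul,
    card_Ioo_cast hk, mul_one]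
  intro m hm
  rw [Finset.mem_Ioo] at hm
  exact h m hm.1 hm.2

/-! ### Lower bounds on `ρ_α` -/

/-- The test vector is the indicator of the core. -/
lemma core_le_rho {α : ℝ} (hα1 : α < 1) {k P Q : ℕ} (hk : 4 ≤ k)
    (hP : 1 ≤ P) (hQ : 1 ≤ Q) :
    α * (k - 1) + (1 - α) ≤ rhoAlpha α (bugGraph k P Q) := by
  have hk' : (4 : ℝ) ≤ k := by exact_mod_cast hk
  set Z : ℕ → ℝ := fun m => if P < m ∧ m < P + k - 1 then 1 else 0 with hZ
  have hin : ∀ m, P < m → m < P + k - 1 → Z m = 1 := fun m h h' => if_pos ⟨h, h'⟩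
  have hout : ∀ m, ¬ (P < m ∧ m < P + k - 1) → Z m = 0 := fun m h => if_neg h
  have hnn : ∀ m, 0 ≤ Z m := fun m => by simp only [hZ]; split_ifs <;> norm_num
  refine le_rho hk hP hQ Z ?_ ?_ _ (fun m _ _ => hnn m) (fun m _ _ => ?_) ?_
  · rw [hout 0 (by omega), hout 1 (by omega)]; ring
  · rw [hout _ (by omega), hout _ (by omega)]; ring
  · have hS := sum_core_const hk hin
    have h1α : 0 < 1 - α := by linarith
    by_cases h1 : P < m ∧ m < P + k - 1
    · rw [bugOp_core α Z h1.1 h1.2, hS, hin m h1.1 h1.2, hout P (by omega), hout _ (by omega)]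
      nlinarith
    · rw [hout m h1, mul_zero]
      by_cases h2 : m < P ∨ P + k - 1 < m
      · rw [bugOp_path α Z h2, hout m h1]
        have := mul_nonneg h1α.le (add_nonneg (hnn (m - 1)) (hnn (m + 1)))
        linarith
      · obtain rfl | rfl : m = P ∨ m = P + k - 1 := by omega
        · rw [bugOp_left α hk, hS, hout _ h1]
          have := mul_nonneg h1α.le (add_nonneg (hnn (m - 1)) (by linarith : (0 : ℝ) ≤ k - 2))
          linarith
        · rw [bugOp_right α hk, hS, hout _ h1]
          have := mul_nonneg h1α.le
            (add_nonneg (hnn (P + k - 1 + 1)) (by linarith : (0 : ℝ) ≤ k - 2))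
          linarith
  · rw [hin _ (by omega) (by omega)]; norm_num

/-- The test vector is the indicator of the clique. -/
lemma two_lt_rho {α β : ℝ} (hα0 : 0 ≤ α) (hα1 : α < 1) (hβ : (1 - α) * β = α) {k P Q : ℕ}
    (hk : 4 ≤ k) (hP : 1 ≤ P) (hQ : 1 ≤ Q) : 2 < rhoAlpha α (bugGraph k P Q) := by
  have hk' : (4 : ℝ) ≤ k := by exact_mod_cast hk
  have h1α : 0 < 1 - α := by linarith
  -- The indicator of the clique; where the neighbouring position of `u` or `v` is a phantom one,
  -- the value there has to be `-β` instead of `0`.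
  set Z : ℕ → ℝ := fun m => if m < P then (if P = 1 then -β else 0) else
    if P + k - 1 < m then (if Q = 1 then -β else 0) else 1 with hZ
  have hin : ∀ m, P ≤ m → m ≤ P + k - 1 → Z m = 1 := fun m h h' => by
    simp only [hZ]; rw [if_neg (by omega), if_neg (by omega)]
  have hlo : ∀ m, m < P → Z m = if P = 1 then -β else 0 := fun m h => by
    simp only [hZ]; rw [if_pos h]
  have hhi : ∀ m, P + k - 1 < m → Z m = if Q = 1 then -β else 0 := fun m h => by
    simp only [hZ]; rw [if_neg (by omega), if_pos h]
  have hlo' : 0 ≤ α + (1 - α) * Z (P - 1) := by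
    rw [hlo _ (by omega)]; split_ifs <;> linarith
  have hhi' : 0 ≤ α + (1 - α) * Z (P + k - 1 + 1) := by
    rw [hhi _ (by omega)]; split_ifs <;> linarith
  have hout : ∀ m, 1 ≤ m → m ≤ k + P + Q - 2 → (m < P ∨ P + k - 1 < m) → Z m = 0 := by
    rintro m h h' (h1 | h1)
    · rw [hlo _ h1, if_neg (by omega)]
    · rw [hhi _ h1, if_neg (by omega)]
  have hnn : ∀ m, 1 ≤ m → m ≤ k + P + Q - 2 → 0 ≤ Z m := by
    intro m h h'
    by_cases h1 : m < P ∨ P + k - 1 < m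
    · rw [hout m h h' h1]
    · rw [hin m (by omega) (by omega)]; norm_num
  have hS := sum_core_const hk (fun m h h' => hin m (le_of_lt h) (le_of_lt h'))
  have hcore : ∀ m, P < m → m < P + k - 1 → 2 * Z m < bugOp α k P Z m := by
    intro m h h'
    rw [bugOp_core α Z h h', hS, hin m h.le h'.le, hin P le_rfl (by omega),
      hin _ (by omega) le_rfl]
    nlinarith
  refine lt_rho hk hP hQ Z ?_ ?_ _ hnn (fun m hm hm' => ?_) ?_ (hcore _ (by omega) (by omega))
  · rw [hlo 0 (by omega)]
    split_ifs with h
    · rw [hin 1 (by omega) (by omega)]; linarith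
    · rw [hout 1 le_rfl (by omega) (by omega)]; ring
  · rw [hhi (k + P + Q - 2 + 1) (by omega)]
    split_ifs with h
    · rw [hin _ (by omega) (by omega)]; linarith
    · rw [hout _ (by omega) (by omega) (by omega)]; ring
  · by_cases h2 : m < P ∨ P + k - 1 < m
    · rw [bugOp_path α Z h2, hout m hm hm' h2]
      have hz : ∀ j, j = m - 1 ∨ j = m + 1 → 0 ≤ Z j := by
        intro j hj
        by_cases h3 : 1 ≤ j ∧ j ≤ k + P + Q - 2
        · exact hnn j h3.1 h3.2
        · rcases h2 with h2 | h2
          · rw [hlo j (by omega), if_neg (by omega)]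
          · rw [hhi j (by omega), if_neg (by omega)]
      have := mul_nonneg h1α.le (add_nonneg (hz (m - 1) (Or.inl rfl)) (hz (m + 1) (Or.inr rfl)))
      linarith
    · by_cases h3 : P < m ∧ m < P + k - 1
      · exact (hcore m h3.1 h3.2).le
      · obtain rfl | rfl : m = P ∨ m = P + k - 1 := by omega
        · rw [bugOp_left α hk, hS, hin m le_rfl (by omega)]
          nlinarith
        · rw [bugOp_right α hk, hS, hin _ (by omega) le_rfl]
          nlinarith
  · rw [hin _ (by omega) (by omega)]; norm_num

/-! ### The eigenvector recurrence along a path -/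

/-- The values `f₁ = 1, f₂, f₃, …` of an eigenvector along a pendant path, starting from the free
end, where `s = (ρ - 2α)/(1 - α)`. The phantom value `f₀ = -β` with `β = α/(1 - α)` accounts for
the end vertex having degree one. -/
noncomputable def pathSeq (β s : ℝ) : ℕ → ℝ
  | 0 => -β
  | 1 => 1
  | m + 2 => s * pathSeq β s (m + 1) - pathSeq β s m

lemma pathSeq_mono {β s : ℝ} (hβ : 0 ≤ β) (hs : 2 < s) (m : ℕ) :
    0 < pathSeq β s (m + 1) ∧ pathSeq β s m < pathSeq β s (m + 1) := by
  induction m with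
  | zero => simp only [pathSeq]; constructor <;> linarith
  | succ m ih =>
    obtain ⟨h1, h2⟩ := ih
    have : pathSeq β s (m + 1) < pathSeq β s (m + 2) := by
      rw [pathSeq]; nlinarith
    exact ⟨h1.trans this, this⟩

/-- The discrete Wronskian of the recurrence is constant. -/
lemma pathSeq_casoratian (β s : ℝ) (m : ℕ) :
    pathSeq β s (m + 1) ^ 2 - pathSeq β s (m + 2) * pathSeq β s m = 1 + β * (s + β) := by
  induction m with
  | zero => simp only [pathSeq]; ring
  | succ m ih =>
    rw [← ih, pathSeq.eq_3 β s (m + 1), pathSeq.eq_3 β s m]; ring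

/-- `h_m = R f_m - f_{m-1}`, where `R = (ρ - α(k - 1))/(1 - α)`. For an eigenvector with core sum
`S`, the root of an attached path on `m` vertices has the value `S f_m / h_m`. Meant for `m ≥ 1`. -/
noncomputable def rootDen (β s R : ℝ) (m : ℕ) : ℝ := R * pathSeq β s m - pathSeq β s (m - 1)

lemma rootDen_strictMono {β s R : ℝ} (hβ : 0 ≤ β) (hs : 2 < s) (hR : 1 ≤ R) :
    StrictMono fun m => rootDen β s R (m + 1) := by
  refine strictMono_nat_of_lt_succ fun m => ?_
  obtain ⟨h1, h2⟩ := pathSeq_mono hβ hs m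
  obtain ⟨h3, h4⟩ := pathSeq_mono hβ hs (m + 1)
  simp only [rootDen, Nat.add_sub_cancel]
  rw [show m + 1 + 1 = m + 2 from rfl, pathSeq.eq_3 β s m] at *
  nlinarith [mul_nonneg (sub_nonneg.2 hR) (sub_nonneg.2 h4.le), mul_pos (sub_pos.2 hs) h1]

lemma rootDen_pos {β s R : ℝ} (hβ : 0 ≤ β) (hs : 2 < s) (hR : 1 ≤ R) {m : ℕ} (hm : 1 ≤ m) :
    0 < rootDen β s R m := by
  obtain ⟨m, rfl⟩ := Nat.exists_eq_add_of_le' hm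
  obtain ⟨h1, h2⟩ := pathSeq_mono hβ hs m
  simp only [rootDen, Nat.add_sub_cancel]
  nlinarith

/-- The increments of `f_m / h_m` have constant numerator. -/
lemma ratio_sub {β s R : ℝ} (hβ : 0 ≤ β) (hs : 2 < s) (hR : 1 ≤ R) (m : ℕ) :
    pathSeq β s (m + 2) / rootDen β s R (m + 2) - pathSeq β s (m + 1) / rootDen β s R (m + 1) =
      (1 + β * (s + β)) / (rootDen β s R (m + 1) * rootDen β s R (m + 2)) := by
  have h1 := rootDen_pos hβ hs hR (m := m + 1) (by omega)
  have h2 := rootDen_pos hβ hs hR (m := m + 2) (by omega)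
  rw [div_sub_div _ _ h2.ne' h1.ne', ← pathSeq_casoratian β s m,
    mul_comm (rootDen β s R (m + 1)) (rootDen β s R (m + 2))]
  congr 1
  simp only [rootDen, Nat.add_sub_cancel, show m + 2 - 1 = m + 1 from rfl]
  ring

/-- The discrete concavity of `m ↦ f_m / h_m`, which is what makes balancing increase `ρ_α`. -/
lemma ratio_lt {β s R : ℝ} (hβ : 0 ≤ β) (hs : 2 < s) (hR : 1 ≤ R) {p q : ℕ} (hq : 1 ≤ q)
    (hp : q + 2 ≤ p) :
    pathSeq β s p / rootDen β s R p + pathSeq β s q / rootDen β s R q <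
      pathSeq β s (p - 1) / rootDen β s R (p - 1) +
        pathSeq β s (q + 1) / rootDen β s R (q + 1) := by
  obtain ⟨a, rfl⟩ := Nat.exists_eq_add_of_le' hq
  obtain ⟨b, rfl⟩ := Nat.exists_eq_add_of_le' (show 2 ≤ p by omega)
  have ha := ratio_sub hβ hs hR a
  have hb := ratio_sub hβ hs hR b
  have h1 := rootDen_pos hβ hs hR (m := a + 1) (by omega)
  have h2 := rootDen_pos hβ hs hR (m := a + 2) (by omega)
  have h3 : rootDen β s R (a + 1) < rootDen β s R (b + 1) :=
    rootDen_strictMono hβ hs hR (show a < b by omega)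
  have h4 : rootDen β s R (a + 2) < rootDen β s R (b + 2) :=
    rootDen_strictMono hβ hs hR (show a + 1 < b + 1 by omega)
  have h5 : (1 + β * (s + β)) / (rootDen β s R (b + 1) * rootDen β s R (b + 2)) <
      (1 + β * (s + β)) / (rootDen β s R (a + 1) * rootDen β s R (a + 2)) := by
    apply div_lt_div_of_pos_left
    · have : 0 ≤ β * (s + β) := mul_nonneg hβ (by linarith)
      linarith
    · positivity
    · exact mul_lt_mul'' h3 h4 h1.le h2.le
  rw [show b + 2 - 1 = b + 1 from rfl, show a + 1 + 1 = a + 2 from rfl]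
  linarith

lemma eq_smul_pathSeq {β s : ℝ} {Y : ℕ → ℝ} {P : ℕ} (h0 : Y 0 = -β * Y 1)
    (h : ∀ m, m + 1 < P → Y (m + 2) = s * Y (m + 1) - Y m) :
    ∀ m, m ≤ P → Y m = Y 1 * pathSeq β s m := by
  intro m
  induction m using Nat.strong_induction_on with
  | _ m ih =>
    intro hm
    match m with
    | 0 => rw [h0, pathSeq]; ring
    | 1 => rw [pathSeq, mul_one]
    | m + 2 =>
      rw [h m (by omega), ih (m + 1) (by omega) (by omega), ih m (by omega) (by omega), pathSeq]
      ring

/-! ### The equation for `ρ_α` -/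

/-- Solving the eigenvalue equations along the two paths in terms of the core sum `S` and adding
them over the core gives a scalar equation satisfied by `ρ_α`. -/
lemma rho_equation {α β s R : ℝ} (hα1 : α < 1) (hβ0 : 0 ≤ β)
    (hβ : (1 - α) * β = α) {k P Q : ℕ} (hk : 4 ≤ k) (hP : 1 ≤ P) (hQ : 1 ≤ Q)
    (hs : (1 - α) * s = rhoAlpha α (bugGraph k P Q) - 2 * α) (hs2 : 2 < s)
    (hR : (1 - α) * R = rhoAlpha α (bugGraph k P Q) - α * (k - 1)) (hR1 : 1 ≤ R) :
    R = (k - 3) + (k - 2) * (pathSeq β s P / rootDen β s R P +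
      pathSeq β s Q / rootDen β s R Q) := by
  have : Nonempty (Fin (k + P + Q - 2)) := ⟨⟨0, by omega⟩⟩
  have h1α : 0 < 1 - α := by linarith
  obtain ⟨v, hv0, hv⟩ :=
    (exists_eigenvector_specRad (isHermitian_Aalpha α (bugGraph k P Q))).1
  change _ = rhoAlpha α (bugGraph k P Q) • v at hv
  set ρ := rhoAlpha α (bugGraph k P Q) with hρ
  obtain ⟨N, hNdef⟩ : ∃ N, N = k + P + Q - 2 := ⟨_, rfl⟩
  obtain ⟨Z, hZv, hZ0, hZN⟩ : ∃ Z : ℕ → ℝ, (∀ i : Fin (k + P + Q - 2), Z (i + 1) = v i) ∧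
      Z 0 = -β * Z 1 ∧ Z (N + 1) = -β * Z N := by
    let Y : ℕ → ℝ := fun m => if h : m - 1 < k + P + Q - 2 then v ⟨m - 1, h⟩ else 0
    refine ⟨fun m => if m = 0 then -β * Y 1 else if m = N + 1 then -β * Y N else Y m,
      fun i => ?_, ?_, ?_⟩
    · have hi := i.2
      simp only
      rw [if_neg (by omega), if_neg (by omega)]
      simp only [Y, Nat.add_sub_cancel, dif_pos hi]
    · simp only [if_true]
      rw [if_neg (by omega), if_neg (by omega)]
    · simp only [if_true]
      rw [if_neg (by omega), if_neg (by omega), if_neg (by omega)]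
  have heig : ∀ m, 1 ≤ m → m ≤ N → bugOp α k P Z m = ρ * Z m := by
    intro m hm hm'
    have h0 : α * Z 1 + (1 - α) * Z 0 = 0 := by rw [hZ0]; linear_combination (-Z 1) * hβ
    have hN : α * Z N + (1 - α) * Z (N + 1) = 0 := by rw [hZN]; linear_combination (-Z N) * hβ
    have h := mulVec_bug α hk hP hQ Z h0 (by rw [← hNdef]; exact hN) ⟨m - 1, by omega⟩
    rw [show (fun j : Fin (k + P + Q - 2) => Z (j + 1)) = v from funext hZv, hv] at h
    simp only [Pi.smul_apply, smul_eq_mul, ← hZv, Nat.sub_add_cancel hm] at h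
    exact h.symm
  have hrec : ∀ m, 1 ≤ m → m ≤ N → (m < P ∨ P + k - 1 < m) →
      Z (m - 1) + Z (m + 1) = s * Z m := by
    intro m h h' h''
    have := heig m h h'
    rw [bugOp_path α Z h''] at this
    apply mul_left_cancel₀ h1α.ne'
    linear_combination this - Z m * hs
  -- Along each path the eigenvector is proportional to `pathSeq`.
  have hleft : ∀ m, m ≤ P → Z m = Z 1 * pathSeq β s m := by
    refine eq_smul_pathSeq hZ0 fun m hm => ?_
    have := hrec (m + 1) (by omega) (by omega) (by omega)
    rw [Nat.add_sub_cancel] at this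
    linear_combination this
  have hright : ∀ m, m ≤ Q → Z (N + 1 - m) = Z N * pathSeq β s m := by
    have := eq_smul_pathSeq (β := β) (s := s) (Y := fun m => Z (N + 1 - m)) (P := Q) hZN
      fun m hm => ?_
    · exact this
    · have := hrec (N + 1 - (m + 1)) (by omega) (by omega) (by omega)
      rw [show N + 1 - (m + 1) - 1 = N + 1 - (m + 2) by omega,
        show N + 1 - (m + 1) + 1 = N + 1 - m by omega] at this
      linear_combination this
  set S := ∑ j ∈ Finset.Ioo P (P + k - 1), Z j with hS
  have eP : Z 1 * rootDen β s R P = S := by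
    have := heig P hP (by omega)
    rw [bugOp_left α hk, hleft (P - 1) (by omega), hleft P le_rfl] at this
    apply mul_left_cancel₀ h1α.ne'
    rw [rootDen]
    linear_combination (-1 : ℝ) * this + Z 1 * pathSeq β s P * hR
  have eQ : Z N * rootDen β s R Q = S := by
    have := heig (P + k - 1) (by omega) (by omega)
    rw [bugOp_right α hk, show P + k - 1 + 1 = N + 1 - (Q - 1) by omega,
      show P + k - 1 = N + 1 - Q by omega, hright (Q - 1) (by omega), hright Q le_rfl,
      show N + 1 - Q = P + k - 1 by omega] at this
    apply mul_left_cancel₀ h1α.ne'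
    rw [rootDen]
    linear_combination (-1 : ℝ) * this + Z N * pathSeq β s Q * hR
  have hrP := rootDen_pos hβ0 hs2 hR1 hP
  have hrQ := rootDen_pos hβ0 hs2 hR1 hQ
  have eW : ∀ m, P < m → m < P + k - 1 →
      (R + 1) * Z m = Z 1 * pathSeq β s P + Z N * pathSeq β s Q + S := by
    intro m h h'
    have := heig m (by omega) (by omega)
    rw [bugOp_core α Z h h', hleft P le_rfl, show P + k - 1 = N + 1 - Q by omega,
      hright Q le_rfl, show N + 1 - Q = P + k - 1 by omega] at this
    apply mul_left_cancel₀ h1α.ne'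
    linear_combination (-1 : ℝ) * this + Z m * hR
  -- If the core sum vanished, so would the whole eigenvector.
  have hS0 : S ≠ 0 := by
    intro h0
    rw [h0] at eP eQ
    have hz1 : Z 1 = 0 := (mul_eq_zero.1 eP).resolve_right hrP.ne'
    have hzN : Z N = 0 := (mul_eq_zero.1 eQ).resolve_right hrQ.ne'
    apply hv0
    funext i
    have hi := i.2
    rw [← hZv, Pi.zero_apply]
    by_cases h1 : (i : ℕ) + 1 ≤ P
    · rw [hleft _ h1, hz1, zero_mul]
    · by_cases h2 : (i : ℕ) + 1 < P + k - 1
      · have := eW (i + 1) (by omega) h2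
        rw [hz1, hzN, h0] at this
        have hR' : R + 1 ≠ 0 := by linarith
        apply mul_left_cancel₀ hR'
        linear_combination this
      · have := hright (N + 1 - (i + 1)) (by omega)
        rw [show N + 1 - (N + 1 - ((i : ℕ) + 1)) = i + 1 by omega, hzN, zero_mul] at this
        exact this
  have hsum : (R + 1) * S =
      (k - 2) * (Z 1 * pathSeq β s P + Z N * pathSeq β s Q + S) := by
    have hcongr : ∀ m ∈ Finset.Ioo P (P + k - 1), (R + 1) * Z m =
        Z 1 * pathSeq β s P + Z N * pathSeq β s Q + S := fun m hm =>
      eW m (Finset.mem_Ioo.1 hm).1 (Finset.mem_Ioo.1 hm).2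
    calc (R + 1) * S = ∑ m ∈ Finset.Ioo P (P + k - 1), (R + 1) * Z m := by
          rw [hS, Finset.mul_sum]
      _ = _ := by
          rw [Finset.sum_congr rfl hcongr, Finset.sum_const, nsmul_eq_mul, card_Ioo_cast hk]
  have hz1 : Z 1 = S / rootDen β s R P := by rw [eq_div_iff hrP.ne']; exact eP
  have hzN : Z N = S / rootDen β s R Q := by rw [eq_div_iff hrQ.ne']; exact eQ
  rw [hz1, hzN] at hsum
  apply mul_right_cancel₀ hS0
  linear_combination hsum

/-- If the scalar equation of `rho_equation` fails at `t` in the direction `<`, the vector that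
solves the eigenvalue equations for `t` outside the core, with value `1` on the core, is strictly
subinvariant. -/
lemma lt_rho_of_ratio {α β s R t : ℝ} (hα1 : α < 1) (hβ0 : 0 ≤ β)
    (hβ : (1 - α) * β = α) {k P Q : ℕ} (hk : 4 ≤ k) (hP : 1 ≤ P) (hQ : 1 ≤ Q)
    (hs : (1 - α) * s = t - 2 * α) (hs2 : 2 < s)
    (hR : (1 - α) * R = t - α * (k - 1)) (hR1 : 1 ≤ R)
    (h : R < (k - 3) + (k - 2) * (pathSeq β s P / rootDen β s R P +
      pathSeq β s Q / rootDen β s R Q)) :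
    t < rhoAlpha α (bugGraph k P Q) := by
  have hk' : (4 : ℝ) ≤ k := by exact_mod_cast hk
  have h1α : 0 < 1 - α := by linarith
  have hrP := rootDen_pos hβ0 hs2 hR1 hP
  have hrQ := rootDen_pos hβ0 hs2 hR1 hQ
  obtain ⟨c, hc⟩ : ∃ c, c = ((k : ℝ) - 2) / rootDen β s R P := ⟨_, rfl⟩
  obtain ⟨d, hd⟩ : ∃ d, d = ((k : ℝ) - 2) / rootDen β s R Q := ⟨_, rfl⟩
  have hc0 : 0 ≤ c := by rw [hc]; exact div_nonneg (by linarith) hrP.le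
  have hd0 : 0 ≤ d := by rw [hd]; exact div_nonneg (by linarith) hrQ.le
  have ec : c * rootDen β s R P = k - 2 := by rw [hc, div_mul_cancel₀ _ hrP.ne']
  have ed : d * rootDen β s R Q = k - 2 := by rw [hd, div_mul_cancel₀ _ hrQ.ne']
  have h' : R < (k - 3) + (c * pathSeq β s P + d * pathSeq β s Q) := by
    rw [hc, hd]; convert h using 2; ring
  have hf : ∀ m, 1 ≤ m → 0 ≤ pathSeq β s m := fun m hm => by
    obtain ⟨m, rfl⟩ := Nat.exists_eq_add_of_le' hm
    exact (pathSeq_mono hβ0 hs2 m).1.le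
  set N := k + P + Q - 2 with hNdef
  set Z : ℕ → ℝ := fun m => if m ≤ P then c * pathSeq β s m else
    if m < P + k - 1 then 1 else d * pathSeq β s (N + 1 - m) with hZ
  have hlo : ∀ m, m ≤ P → Z m = c * pathSeq β s m := fun m h => by
    simp only [hZ]; rw [if_pos h]
  have hin : ∀ m, P < m → m < P + k - 1 → Z m = 1 := fun m h h' => by
    simp only [hZ]; rw [if_neg (by omega), if_pos (by omega)]
  have hhi : ∀ m, P + k - 1 ≤ m → Z m = d * pathSeq β s (N + 1 - m) := fun m h => by
    simp only [hZ]; rw [if_neg (by omega), if_neg (by omega)]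
  have hS := sum_core_const hk hin
  have hcore : ∀ m, P < m → m < P + k - 1 → t * Z m < bugOp α k P Z m := by
    intro m h1 h2
    rw [bugOp_core α Z h1 h2, hS, hin m h1 h2, hlo P le_rfl, hhi _ le_rfl,
      show N + 1 - (P + k - 1) = Q by omega]
    nlinarith [mul_lt_mul_of_pos_left h' h1α]
  refine lt_rho hk hP hQ Z ?_ ?_ _ (fun m hm hm' => ?_) (fun m hm hm' => ?_) ?_
    (hcore _ (by omega) (by omega))
  · rw [hlo 0 (by omega), hlo 1 hP, pathSeq, pathSeq]
    linear_combination (-c) * hβ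
  · rw [← hNdef, hhi N (by omega), hhi (N + 1) (by omega), Nat.sub_self,
      show N + 1 - N = 1 by omega, pathSeq, pathSeq]
    linear_combination (-d) * hβ
  · by_cases h1 : m ≤ P
    · rw [hlo m h1]; exact mul_nonneg hc0 (hf m hm)
    · by_cases h2 : m < P + k - 1
      · rw [hin m (by omega) h2]; norm_num
      · rw [hhi m (by omega)]; exact mul_nonneg hd0 (hf _ (by omega))
  · rcases lt_trichotomy m P with h1 | rfl | h1
    · obtain ⟨m, rfl⟩ := Nat.exists_eq_add_of_le' hm
      rw [bugOp_path α Z (Or.inl h1), hlo _ h1.le, hlo (m + 1 - 1) (by omega),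
        hlo (m + 1 + 1) (by omega), Nat.add_sub_cancel, show m + 1 + 1 = m + 2 from rfl,
        pathSeq.eq_3 β s m]
      apply le_of_eq
      linear_combination (-c * pathSeq β s (m + 1)) * hs
    · rw [bugOp_left α hk, hS, hlo _ le_rfl, hlo (m - 1) (by omega), ← ec, rootDen]
      apply le_of_eq
      linear_combination (-c * pathSeq β s m) * hR
    · rcases lt_trichotomy m (P + k - 1) with h2 | rfl | h2
      · exact (hcore m h1 h2).le
      · rw [bugOp_right α hk, hS, hhi _ le_rfl, hhi (P + k - 1 + 1) (by omega),
          show N + 1 - (P + k - 1) = Q by omega,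
          show N + 1 - (P + k - 1 + 1) = Q - 1 by omega, ← ed, rootDen]
        apply le_of_eq
        linear_combination (-d * pathSeq β s Q) * hR
      · obtain ⟨j, hj⟩ := Nat.exists_eq_add_of_le' (show 1 ≤ N + 1 - m by omega)
        rw [bugOp_path α Z (Or.inr h2), hhi _ h2.le, hhi (m - 1) (by omega),
          hhi (m + 1) (by omega), hj, show N + 1 - (m - 1) = j + 2 by omega,
          show N + 1 - (m + 1) = j by omega, pathSeq.eq_3 β s j]
        apply le_of_eq
        linear_combination (-d * pathSeq β s (j + 1)) * hs
  · rw [hin _ (by omega) (by omega)]; norm_num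

/-- Let `α ∈ [0,1)` and `k ≥ 4`. If `p ≥ q + 2` and `q ≥ 1`,
then `ρ_α(B_{k,p,q}) < ρ_α(B_{k,p−1,q+1})`. -/
theorem bug_balancing (α : ℝ) (hα0 : 0 ≤ α) (hα1 : α < 1)
    (k p q : ℕ) (hk : 4 ≤ k) (hq : 1 ≤ q) (hp : q + 2 ≤ p) :
    rhoAlpha α (bugGraph k p q) < rhoAlpha α (bugGraph k (p - 1) (q + 1)) := by
  have hk' : (4 : ℝ) ≤ k := by exact_mod_cast hk
  have h1α : 0 < 1 - α := by linarith
  obtain ⟨β, hβ⟩ : ∃ β, (1 - α) * β = α := ⟨α / (1 - α), mul_div_cancel₀ _ h1α.ne'⟩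
  obtain ⟨s, hs⟩ : ∃ s, (1 - α) * s = rhoAlpha α (bugGraph k p q) - 2 * α :=
    ⟨_, mul_div_cancel₀ _ h1α.ne'⟩
  obtain ⟨R, hR⟩ : ∃ R, (1 - α) * R = rhoAlpha α (bugGraph k p q) - α * (k - 1) :=
    ⟨_, mul_div_cancel₀ _ h1α.ne'⟩
  have hβ0 : 0 ≤ β := by
    by_contra! h
    nlinarith
  have hs2 : 2 < s := by
    have := two_lt_rho hα0 hα1 hβ hk (show 1 ≤ p by omega) hq
    exact lt_of_mul_lt_mul_left (by linarith) h1α.le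
  have hR1 : 1 ≤ R := by
    have := core_le_rho hα1 hk (show 1 ≤ p by omega) hq
    exact le_of_mul_le_mul_left (by linarith) h1α
  have heq := rho_equation hα1 hβ0 hβ hk (show 1 ≤ p by omega) hq hs hs2 hR hR1
  have hlt := ratio_lt hβ0 hs2 hR1 hq hp
  refine lt_rho_of_ratio hα1 hβ0 hβ hk (show 1 ≤ p - 1 by omega) (show 1 ≤ q + 1 by omega)
    hs hs2 hR hR1 ?_
  have := mul_lt_mul_of_pos_left hlt (show (0 : ℝ) < k - 2 by linarith)
  linarith
end

section
/- Let α ∈ [0,1] and let k ≥ 4 be an integer. Then ρ_α(K_k − e) = (1/2)·( k − 3 + kα + sqrt( k²(1−α)² + 2(k−4)(1−α) + 1 ) ); equivalently, ρ_α(K_k − e) is the larger root of the quadratic equation X² − (k − 3 + kα)X + (k−2)((k+1)α − 2) = 0. -/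
/-- `K_k - e`: the complete graph on `k` vertices with the edge `{0,1}` removed. -/
def KminusE (k : ℕ) : SimpleGraph (Fin k) :=
  SimpleGraph.fromRel (fun i j => ¬(i.val = 0 ∧ j.val = 1) ∧ ¬(i.val = 1 ∧ j.val = 0))

open Classical in
lemma Aalpha_mulVec_apply {V : Type*} [Fintype V] [DecidableEq V] (α : ℝ) (G : SimpleGraph V)
    (v : V → ℝ) (i : V) :
    (Aalpha α G).mulVec v i =
      α * (∑ j, if G.Adj i j then (1 : ℝ) else 0) * v i
        + (1 - α) * ∑ j, if G.Adj i j then v j else 0 := by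
  simp only [Aalpha, Matrix.add_mulVec, Matrix.smul_mulVec, Pi.add_apply, Pi.smul_apply,
    smul_eq_mul, Matrix.mulVec_diagonal, SimpleGraph.adjMatrix_mulVec_apply]
  rw [← Finset.sum_filter, ← Finset.sum_filter, ← SimpleGraph.neighborFinset_eq_filter]
  simp [mul_assoc]

lemma KminusE_adj {k : ℕ} (i j : Fin k) :
    (KminusE k).Adj i j ↔
      i ≠ j ∧ ¬(i.val = 0 ∧ j.val = 1) ∧ ¬(i.val = 1 ∧ j.val = 0) := by
  simp only [KminusE, SimpleGraph.fromRel_adj]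
  tauto

open Classical in
lemma KminusE_sum_zero {m : ℕ} (f : Fin (m + 2) → ℝ) :
    (∑ j, if (KminusE (m + 2)).Adj 0 j then f j else 0) = ∑ j : Fin m, f j.succ.succ := by
  rw [Fin.sum_univ_succ, Fin.sum_univ_succ]
  simp [KminusE_adj, Fin.ext_iff]

open Classical in
lemma KminusE_sum_one {m : ℕ} (f : Fin (m + 2) → ℝ) :
    (∑ j, if (KminusE (m + 2)).Adj 1 j then f j else 0) = ∑ j : Fin m, f j.succ.succ := by
  rw [Fin.sum_univ_succ, Fin.sum_univ_succ]
  simp [KminusE_adj, Fin.ext_iff]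

open Classical in
lemma KminusE_sum_succ {m : ℕ} (f : Fin (m + 2) → ℝ) (i : Fin m) :
    (∑ j, if (KminusE (m + 2)).Adj i.succ.succ j then f j else 0)
      = f 0 + f 1 + ∑ j : Fin m, f j.succ.succ - f i.succ.succ := by
  have h : (∑ j : Fin m, if i = j then 0 else f j.succ.succ)
      = ∑ j : Fin m, f j.succ.succ - f i.succ.succ := by
    have h' : ∀ j : Fin m, (if i = j then 0 else f j.succ.succ)
        = f j.succ.succ - (if i = j then f j.succ.succ else 0) := by
      intro j; split_ifs <;> simp
    simp [h', Finset.sum_sub_distrib]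
  have e : ∀ j : Fin m, (if (KminusE (m + 2)).Adj i.succ.succ j.succ.succ
      then f j.succ.succ else 0) = if i = j then 0 else f j.succ.succ := by
    intro j
    by_cases hij : i = j <;> simp [KminusE_adj, hij]
  rw [Fin.sum_univ_succ, Fin.sum_univ_succ, Finset.sum_congr rfl (fun j _ => e j), h]
  simp [KminusE_adj, Fin.ext_iff]
  ring

/-- The eigenvalue equation of `A_α(K_k − e)`, row by row. -/
lemma KminusE_eigen_iff {m : ℕ} (α t : ℝ) (v : Fin (m + 2) → ℝ) :
    (Aalpha α (KminusE (m + 2))).mulVec v = t • v ↔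
      (α * m * v 0 + (1 - α) * ∑ j : Fin m, v j.succ.succ = t * v 0) ∧
      (α * m * v 1 + (1 - α) * ∑ j : Fin m, v j.succ.succ = t * v 1) ∧
      ∀ i : Fin m, α * (m + 1) * v i.succ.succ
        + (1 - α) * (v 0 + v 1 + ∑ j : Fin m, v j.succ.succ - v i.succ.succ)
          = t * v i.succ.succ := by
  rw [funext_iff, Fin.forall_fin_succ, Fin.forall_fin_succ]
  simp only [Aalpha_mulVec_apply, Fin.succ_zero_eq_one, KminusE_sum_zero, KminusE_sum_one,
    KminusE_sum_succ]
  simp only [Finset.sum_const, Finset.card_univ, Fintype.card_fin, nsmul_eq_mul, mul_one,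
    Pi.smul_apply, smul_eq_mul]
  ring_nf

/-- The larger root of the quadratic, and its lower bound by the second diagonal entry
`α(k−1) + β(k−3)` of the quotient matrix. -/
lemma larger_root (α k : ℝ) (hα1 : α ≤ 1) (hk : 4 ≤ k) (r : ℝ)
    (hr : r = (1 / 2) * (k - 3 + k * α +
        Real.sqrt (k ^ 2 * (1 - α) ^ 2 + 2 * (k - 4) * (1 - α) + 1))) :
    r ^ 2 - (k - 3 + k * α) * r + (k - 2) * ((k + 1) * α - 2) = 0 ∧
    (∀ X : ℝ, X ^ 2 - (k - 3 + k * α) * X + (k - 2) * ((k + 1) * α - 2) = 0 → X ≤ r) ∧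
    α * (k - 1) + (1 - α) * (k - 3) ≤ r := by
  have hD : 0 ≤ k ^ 2 * (1 - α) ^ 2 + 2 * (k - 4) * (1 - α) + 1 := by
    have h1 : 0 ≤ (k - 4) * (1 - α) := mul_nonneg (by linarith) (by linarith)
    nlinarith [sq_nonneg (k * (1 - α))]
  set D := k ^ 2 * (1 - α) ^ 2 + 2 * (k - 4) * (1 - α) + 1 with hDdef
  have hs := Real.sq_sqrt hD
  refine ⟨?_, ?_, ?_⟩
  · subst hr
    linear_combination (1 / 4) * hs + (1 / 4) * hDdef
  · intro X hX
    have : 2 * X - (k - 3 + k * α) ≤ Real.sqrt D := by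
      apply Real.le_sqrt_of_sq_le
      apply le_of_eq
      rw [hDdef]
      linear_combination 4 * hX
    linarith
  · have : 2 * (α * (k - 1) + (1 - α) * (k - 3)) - (k - 3 + k * α) ≤ Real.sqrt D := by
      apply Real.le_sqrt_of_sq_le
      -- `D` is the square of the difference of the diagonal entries plus `8β²(k−2)`.
      have h8 : 0 ≤ 8 * ((1 - α) ^ 2 * (k - 2)) := by
        have : 0 ≤ k - 2 := by linarith
        positivity
      rw [hDdef]
      linarith
    linarith

/-- The three-way classification of eigenvectors bounds every eigenvalue by the larger root. -/
lemma KminusE_eigen_le {m : ℕ} (hm : 2 ≤ m) (α : ℝ) (hα0 : 0 ≤ α) (hα1 : α ≤ 1) (r t : ℝ)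
    (hroot : ∀ X : ℝ, (X - α * m) * (X - (α * (m + 1) + (1 - α) * (m - 1)))
      - 2 * (1 - α) ^ 2 * m = 0 → X ≤ r)
    (hr : α * (m + 1) + (1 - α) * (m - 1) ≤ r)
    (v : Fin (m + 2) → ℝ) (hv : v ≠ 0)
    (h : (Aalpha α (KminusE (m + 2))).mulVec v = t • v) : t ≤ r := by
  have hm' : (2 : ℝ) ≤ m := by exact_mod_cast hm
  have hβ : 0 ≤ (1 - α) * (m - 1) := mul_nonneg (by linarith) (by linarith)
  have hβm : 0 ≤ (1 - α) * m := mul_nonneg (by linarith) (by linarith)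
  obtain ⟨h0, h1, h2⟩ := (KminusE_eigen_iff α t v).1 h
  by_cases h01 : v 0 = v 1
  swap
  · have : t = α * m := by
      apply mul_right_cancel₀ (sub_ne_zero.2 h01)
      linear_combination h1 - h0
    linarith
  by_cases hc : ∃ i j : Fin m, v i.succ.succ ≠ v j.succ.succ
  · obtain ⟨i, j, hij⟩ := hc
    have : t = α * (m + 1) - (1 - α) := by
      apply mul_right_cancel₀ (sub_ne_zero.2 hij)
      linear_combination h2 j - h2 i
    linarith
  push Not at hc
  let i0 : Fin m := ⟨0, by omega⟩
  set a := v 0 with ha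
  set b := v i0.succ.succ with hb
  have hall : ∀ j : Fin m, v j.succ.succ = b := fun j => hc j i0
  have hsum : ∑ j : Fin m, v j.succ.succ = m * b := by simp [hall]
  have e2 := h2 i0
  rw [← hb, ← h01, hsum] at e2
  rw [hsum] at h0
  apply hroot
  -- The vector `(a, b)` is a nonzero kernel vector of the quotient matrix minus `t`.
  by_cases hb0 : b = 0
  · have ha0 : a ≠ 0 := by
      intro ha0
      apply hv
      rw [funext_iff, Fin.forall_fin_succ, Fin.forall_fin_succ]
      refine ⟨ha0, ?_, fun j => ?_⟩
      · simpa [← h01] using ha0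
      · simpa [hb0] using hall j
    apply mul_right_cancel₀ ha0
    linear_combination (-(t - (α * (m + 1) + (1 - α) * (m - 1)))) * h0 - (1 - α) * m * e2
  · apply mul_right_cancel₀ hb0
    linear_combination (-(t - α * m)) * e2 - 2 * (1 - α) * h0

/-- Let `α ∈ [0,1]` and `k ≥ 4`. Then
`ρ_α(K_k − e) = (k − 3 + kα + √(k²(1−α)² + 2(k−4)(1−α) + 1))/2`; equivalently,
`ρ_α(K_k − e)` is the larger root of
`X² − (k − 3 + kα)X + (k−2)((k+1)α − 2) = 0`. -/
theorem KminusE_alphaIndex_eq (α : ℝ) (hα0 : 0 ≤ α) (hα1 : α ≤ 1)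
    (k : ℕ) (hk : 4 ≤ k) :
    rhoAlpha α (KminusE k) =
      (1 / 2) * ((k : ℝ) - 3 + k * α +
        Real.sqrt ((k : ℝ) ^ 2 * (1 - α) ^ 2 + 2 * ((k : ℝ) - 4) * (1 - α) + 1)) ∧
    rhoAlpha α (KminusE k) ^ 2 - ((k : ℝ) - 3 + k * α) * rhoAlpha α (KminusE k) +
        ((k : ℝ) - 2) * (((k : ℝ) + 1) * α - 2) = 0 ∧
    ∀ X : ℝ, X ^ 2 - ((k : ℝ) - 3 + k * α) * X + ((k : ℝ) - 2) * (((k : ℝ) + 1) * α - 2) = 0 →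
      X ≤ rhoAlpha α (KminusE k) := by
  obtain ⟨m, rfl⟩ : ∃ m, k = m + 2 := ⟨k - 2, by omega⟩
  have hk' : (4 : ℝ) ≤ ((m + 2 : ℕ) : ℝ) := by exact_mod_cast hk
  set r : ℝ := (1 / 2) * (((m + 2 : ℕ) : ℝ) - 3 + (m + 2 : ℕ) * α +
        Real.sqrt (((m + 2 : ℕ) : ℝ) ^ 2 * (1 - α) ^ 2
          + 2 * (((m + 2 : ℕ) : ℝ) - 4) * (1 - α) + 1)) with hrdef
  obtain ⟨hq, hmax, hp⟩ := larger_root α _ hα1 hk' r hrdef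
  suffices hρ : rhoAlpha α (KminusE (m + 2)) = r by
    rw [hρ]
    exact ⟨rfl, hq, hmax⟩
  clear_value r
  push_cast at hq hmax hp hk'
  have hm' : (2 : ℝ) ≤ m := by linarith
  refine IsGreatest.csSup_eq ⟨?_, ?_⟩
  -- The common entry on the non-endpoints is positive: `r ≥ α(k−1) + β(k−3) > α(k−2)`.
  · have hb : 0 < r - α * m := by
      have : 0 ≤ (1 - α) * (m - 2) := mul_nonneg (by linarith) (by linarith)
      linarith
    let v : Fin (m + 2) → ℝ := fun i => if i.val < 2 then (1 - α) * m else r - α * m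
    have v0 : v 0 = (1 - α) * m := by simp [v]
    have v1 : v 1 = (1 - α) * m := by simp [v]
    have v2 : ∀ j : Fin m, v j.succ.succ = r - α * m := by
      intro j; simp [v]
    refine ⟨v, ?_, ?_⟩
    · intro hv
      have := v2 ⟨0, by omega⟩
      rw [hv] at this
      simp only [Pi.zero_apply] at this
      linarith
    · rw [KminusE_eigen_iff]
      simp only [v0, v1, v2, Finset.sum_const, Finset.card_univ, Fintype.card_fin, nsmul_eq_mul]
      refine ⟨by ring, by ring, fun _ => ?_⟩
      linear_combination -hq
  · rintro t ⟨v, hv, h⟩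
    refine KminusE_eigen_le (by omega) α hα0 hα1 r t (fun X hX => hmax X ?_) ?_ v hv h
    · linear_combination hX
    · linarith
end

section
/- Let α ∈ [0,1) and let p ≥ 4, q ≥ 1, r ≥ 1 be integers. Then ρ_α(B_{p,q,r}) ≤ ρ_α(B_{p,⌊(q+r)/2⌋,⌈(q+r)/2⌉}). -/
/-! ### Perron vectors and the matrix `A_α` -/

open Matrix in
/-- For a symmetric entrywise nonnegative matrix, the spectral radius is the maximum of the Rayleigh
quotient and has a nonnegative eigenvector. -/
theorem perron_frobenius {n : Type*} [Fintype n] [Nonempty n] [DecidableEq n] (M : Matrix n n ℝ)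
    (hs : Mᵀ = M) (h0 : ∀ i j, 0 ≤ M i j) :
    (∀ y : n → ℝ, y ⬝ᵥ M *ᵥ y ≤ specRad M * (y ⬝ᵥ y)) ∧
      ∃ x : n → ℝ, (∀ i, 0 ≤ x i) ∧ x ≠ 0 ∧ M *ᵥ x = specRad M • x := by
  have hpos : ∀ y : n → ℝ, y ≠ 0 → 0 < y ⬝ᵥ y := fun y hy => by
    have := dotProduct_star_self_pos_iff.2 hy
    simpa using this
  have hcont : Continuous fun y : n → ℝ => y ⬝ᵥ M *ᵥ y := by fun_prop
  have hcont' : Continuous fun y : n → ℝ => y ⬝ᵥ y := by fun_prop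
  have hcomp : IsCompact {y : n → ℝ | y ⬝ᵥ y = 1} := by
    refine Metric.isCompact_of_isClosed_isBounded (isClosed_eq hcont' continuous_const) ?_
    refine (Metric.isBounded_closedBall (x := (0 : n → ℝ)) (r := 1)).subset fun y hy => ?_
    rw [mem_closedBall_zero_iff, pi_norm_le_iff_of_nonneg zero_le_one]
    intro i
    have h1 : y i * y i ≤ y ⬝ᵥ y :=
      Finset.single_le_sum (f := fun i => y i * y i) (fun j _ => mul_self_nonneg _)
        (Finset.mem_univ i)
    rw [Set.mem_ofPred_eq] at hy
    rw [hy] at h1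
    rw [Real.norm_eq_abs, ← sq_le_one_iff_abs_le_one]
    nlinarith
  have hne : {y : n → ℝ | y ⬝ᵥ y = 1}.Nonempty := by
    obtain ⟨i⟩ := ‹Nonempty n›
    exact ⟨Pi.single i 1, by simp⟩
  obtain ⟨x, hx, hmax⟩ := hcomp.exists_isMaxOn hne hcont.continuousOn
  rw [Set.mem_ofPred_eq] at hx
  set l := x ⬝ᵥ M *ᵥ x with hl
  have hray : ∀ y : n → ℝ, y ⬝ᵥ M *ᵥ y ≤ l * (y ⬝ᵥ y) := by
    intro y
    by_cases hy : y = 0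
    · simp [hy]
    have h := hpos y hy
    have hsq := Real.mul_self_sqrt h.le
    have hsp := Real.sqrt_pos.2 h
    set s := Real.sqrt (y ⬝ᵥ y)
    have h1 : (s⁻¹ • y) ∈ {y : n → ℝ | y ⬝ᵥ y = 1} := by
      simp only [Set.mem_ofPred_eq, dotProduct_smul, smul_dotProduct, smul_eq_mul, ← hsq]
      field_simp
    have h2 : (s⁻¹ • y) ⬝ᵥ M *ᵥ (s⁻¹ • y) ≤ l := hmax h1
    simp only [mulVec_smul, dotProduct_smul, smul_dotProduct, smul_eq_mul] at h2
    rw [← hsq]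
    have h3 : y ⬝ᵥ M *ᵥ y = (s⁻¹ * (s⁻¹ * (y ⬝ᵥ M *ᵥ y))) * (s * s) := by
      field_simp
    rw [h3]
    exact mul_le_mul_of_nonneg_right h2 (by positivity)
  -- Taking absolute values does not decrease the quadratic form, as `M` is entrywise nonnegative.
  let z : n → ℝ := fun i => |x i|
  have hzz : z ⬝ᵥ z = 1 := by
    rw [← hx]
    simp [z, dotProduct]
  have hzM : l ≤ z ⬝ᵥ M *ᵥ z := by
    rw [hl]
    simp only [dotProduct, mulVec, Finset.mul_sum, z]
    refine Finset.sum_le_sum fun i _ => Finset.sum_le_sum fun j _ => ?_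
    calc x i * (M i j * x j) ≤ |x i * (M i j * x j)| := le_abs_self _
      _ = _ := by rw [abs_mul, abs_mul, abs_of_nonneg (h0 i j)]
  have hpsd : (l • (1 : Matrix n n ℝ) - M).PosSemidef := by
    refine Matrix.PosSemidef.of_dotProduct_mulVec_nonneg ?_ fun y => ?_
    · rw [IsHermitian, conjTranspose_eq_transpose_of_trivial]
      simp [hs]
    · have := hray y
      simp only [star_trivial, sub_mulVec, smul_mulVec, one_mulVec, dotProduct_sub,
        dotProduct_smul, smul_eq_mul]
      linarith
  have hMz : M *ᵥ z = l • z := by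
    have h1 := (hpsd.dotProduct_mulVec_zero_iff z).1 (by
      have := hray z
      simp only [star_trivial, sub_mulVec, smul_mulVec, one_mulVec, dotProduct_sub,
        dotProduct_smul, smul_eq_mul]
      rw [hzz] at *
      linarith)
    rw [sub_mulVec, smul_mulVec, one_mulVec, sub_eq_zero] at h1
    exact h1.symm
  have hz0 : z ≠ 0 := by
    intro h
    rw [h] at hzz
    simp at hzz
  have hspec : specRad M = l := by
    refine IsGreatest.csSup_eq ⟨⟨z, hz0, hMz⟩, ?_⟩
    rintro t ⟨v, hv, hvt⟩
    have h1 := hray v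
    rw [hvt, dotProduct_smul, smul_eq_mul] at h1
    exact le_of_mul_le_mul_right h1 (hpos v hv)
  rw [hspec]
  exact ⟨hray, z, fun i => abs_nonneg _, hz0, hMz⟩

theorem dotProduct_Aalpha {n : ℕ} (α : ℝ) (G : SimpleGraph (Fin n)) [DecidableRel G.Adj]
    (x y : Fin n → ℝ) :
    x ⬝ᵥ (Aalpha α G).mulVec y =
      ∑ i, ∑ j, if G.Adj i j then x i * (α * y i + (1 - α) * y j) else 0 := by
  have hd : ∀ i [Fintype (G.neighborSet i)],
      (G.degree i : ℝ) = ∑ j, if G.Adj i j then (1 : ℝ) else 0 := by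
    intro i _
    rw [Finset.sum_boole, ← SimpleGraph.card_neighborFinset_eq_degree]
    congr 2
    ext j
    simp
  simp only [dotProduct, Matrix.mulVec]
  refine Finset.sum_congr rfl fun i _ => ?_
  have : ∀ j, Aalpha α G i j * y j =
      (if i = j then α * (∑ j, if G.Adj i j then (1 : ℝ) else 0) * y j else 0) +
        if G.Adj i j then (1 - α) * y j else 0 := by
    intro j
    simp only [Aalpha, Matrix.add_apply, Matrix.smul_apply, Matrix.diagonal_apply, hd,
      SimpleGraph.adjMatrix_apply, smul_eq_mul]
    split_ifs <;> ring
  rw [Finset.sum_congr rfl fun j _ => this j, Finset.sum_add_distrib, Finset.sum_ite_eq,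
    if_pos (Finset.mem_univ i), Finset.mul_sum, Finset.sum_mul, ← Finset.sum_add_distrib,
    Finset.mul_sum]
  refine Finset.sum_congr rfl fun j _ => ?_
  split_ifs <;> ring

theorem Aalpha_transpose {n : ℕ} (α : ℝ) (G : SimpleGraph (Fin n)) :
    (Aalpha α G).transpose = Aalpha α G := by
  simp [Aalpha, Matrix.transpose_add, Matrix.transpose_smul]

theorem Aalpha_nonneg {n : ℕ} {α : ℝ} (h0 : 0 ≤ α) (h1 : α ≤ 1) (G : SimpleGraph (Fin n))
    (i j : Fin n) : 0 ≤ Aalpha α G i j := by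
  have : 0 ≤ 1 - α := by linarith
  simp only [Aalpha, Matrix.add_apply, Matrix.smul_apply, Matrix.diagonal_apply,
      SimpleGraph.adjMatrix_apply, smul_eq_mul]
  split_ifs <;> positivity

/-! ### The bilinear form of the bug graph -/

/-- The contribution of one edge with end values `s, t` (first vector) and `s₂, t₂` (second vector)
to the symmetric bilinear form of `A_α`. -/
def edgeForm (α s t s₂ t₂ : ℝ) : ℝ :=
  s * (α * s₂ + (1 - α) * t₂) + t * (α * t₂ + (1 - α) * s₂)

/-- The bilinear form of `A_α(B_{m+2,Q+1,R+1})` in coordinates adapted to the bug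
graph: the first vector is `(za, zb, zc)` and the second `(a, b, c)`. Here `a 0, …, a Q` are the
values on the path at `u`, starting from `u`; `b 0, …, b R` those on the path at `v`, starting from
`v`; and `c 0, …, c (m - 1)` those on the remaining clique vertices. -/
def bugForm (α : ℝ) (m Q R : ℕ) (za zb zc a b c : ℕ → ℝ) : ℝ :=
  (∑ i ∈ Finset.range Q, edgeForm α (za i) (za (i + 1)) (a i) (a (i + 1))) +
  (∑ i ∈ Finset.range R, edgeForm α (zb i) (zb (i + 1)) (b i) (b (i + 1))) +
  (∑ k ∈ Finset.range m,
    (edgeForm α (zc k) (za 0) (c k) (a 0) + edgeForm α (zc k) (zb 0) (c k) (b 0))) +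
  ∑ k ∈ Finset.range m, ∑ l ∈ Finset.range m,
    if k ≠ l then zc k * (α * c k + (1 - α) * c l) else 0

/-- The standard inner product in the coordinates of `bugForm`. -/
def bugInner (m Q R : ℕ) (za zb zc a b c : ℕ → ℝ) : ℝ :=
  (∑ i ∈ Finset.range (Q + 1), za i * a i) + (∑ i ∈ Finset.range (R + 1), zb i * b i) +
  ∑ k ∈ Finset.range m, zc k * c k

/-- The vector on the vertices of `bugGraph (m + 2) (Q + 1) (R + 1)`, labelled by natural numbers,
with coordinates `(a, b, c)` as in `bugForm`; the root `u` has label `Q`. -/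
def bugVec (m Q : ℕ) (a b c : ℕ → ℝ) (i : ℕ) : ℝ :=
  if i ≤ Q then a (Q - i) else if i ≤ Q + m then c (i - (Q + 1)) else b (i - (Q + 1 + m))

theorem sum_path (g : ℕ → ℕ → ℝ) (Q : ℕ) :
    (∑ i ∈ Finset.range (Q + 1), ∑ j ∈ Finset.range (Q + 1),
      if i + 1 = j ∨ j + 1 = i then g i j else 0) =
    ∑ i ∈ Finset.range Q, (g i (i + 1) + g (i + 1) i) := by
  induction Q with
  | zero => simp
  | succ n ih =>
    have h1 : ∀ (F : ℕ → ℝ), (∑ i ∈ Finset.range (n + 1), if i = n then F i else 0) = F n := by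
      intro F
      rw [Finset.sum_ite_eq' (Finset.range (n + 1)) n F]
      simp
    have h2 : (∑ i ∈ Finset.range (n + 1), if i + 1 = n + 1 ∨ n + 1 + 1 = i then g i (n + 1) else 0)
        = g n (n + 1) := by
      rw [← h1 fun i => g i (n + 1)]
      refine Finset.sum_congr rfl fun i hi => ?_
      rw [Finset.mem_range] at hi
      exact if_congr (by omega) rfl rfl
    have h3 : (∑ i ∈ Finset.range (n + 1), if n + 1 + 1 = i ∨ i + 1 = n + 1 then g (n + 1) i else 0)
        = g (n + 1) n := by
      rw [← h1 fun i => g (n + 1) i]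
      refine Finset.sum_congr rfl fun i hi => ?_
      rw [Finset.mem_range] at hi
      exact if_congr (by omega) rfl rfl
    rw [Finset.sum_range_succ]
    simp only [Finset.sum_range_succ _ (n + 1)]
    rw [Finset.sum_add_distrib, ih, h2, h3, Finset.sum_range_succ _ n]
    simp
    ring

/-- Adjacency in `bugGraph (m + 2) (Q + 1) (R + 1)` on natural number labels, free of truncated
subtraction. -/
def bugAdj (m Q : ℕ) (i j : ℕ) : Prop :=
  i ≠ j ∧ (((i + 1 = j ∧ j ≤ Q) ∨ (Q ≤ i ∧ i ≤ Q + m + 1 ∧ Q ≤ j ∧ j ≤ Q + m + 1 ∧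
      ¬(i = Q ∧ j = Q + m + 1) ∧ ¬(j = Q ∧ i = Q + m + 1)) ∨
    (i + 1 = j ∧ Q + m + 1 ≤ i)) ∨ (j + 1 = i ∧ i ≤ Q) ∨ (j + 1 = i ∧ Q + m + 1 ≤ j))

instance (m Q i j : ℕ) : Decidable (bugAdj m Q i j) := by unfold bugAdj; infer_instance

/-- A sum over ordered pairs of adjacent vertices, by the blocks path at `u`, clique, path at `v`. -/
theorem sum_bugAdj (m Q R : ℕ) (g : ℕ → ℕ → ℝ) :
    (∑ i ∈ Finset.range (Q + 1 + m + (R + 1)), ∑ j ∈ Finset.range (Q + 1 + m + (R + 1)),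
      if bugAdj m Q i j then g i j else 0) =
    (∑ i ∈ Finset.range Q, (g i (i + 1) + g (i + 1) i)) +
    (∑ i ∈ Finset.range R, (g (Q + 1 + m + i) (Q + 1 + m + (i + 1)) +
      g (Q + 1 + m + (i + 1)) (Q + 1 + m + i))) +
    (∑ k ∈ Finset.range m, ((g (Q + 1 + k) Q + g Q (Q + 1 + k)) +
      (g (Q + 1 + k) (Q + 1 + m) + g (Q + 1 + m) (Q + 1 + k)))) +
    ∑ k ∈ Finset.range m, ∑ l ∈ Finset.range m,
      if k ≠ l then g (Q + 1 + k) (Q + 1 + l) else 0 := by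
  have hLL : (∑ i ∈ Finset.range (Q + 1), ∑ j ∈ Finset.range (Q + 1),
      if bugAdj m Q i j then g i j else 0) = ∑ i ∈ Finset.range Q, (g i (i + 1) + g (i + 1) i) := by
    rw [← sum_path]
    refine Finset.sum_congr rfl fun i hi => Finset.sum_congr rfl fun j hj => ?_
    rw [Finset.mem_range] at hi hj
    exact if_congr (by unfold bugAdj; omega) rfl rfl
  have hRR : (∑ i ∈ Finset.range (R + 1), ∑ j ∈ Finset.range (R + 1),
      if bugAdj m Q (Q + 1 + m + i) (Q + 1 + m + j) then g (Q + 1 + m + i) (Q + 1 + m + j) else 0) =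
      ∑ i ∈ Finset.range R, (g (Q + 1 + m + i) (Q + 1 + m + (i + 1)) +
      g (Q + 1 + m + (i + 1)) (Q + 1 + m + i)) := by
    rw [← sum_path fun i j => g (Q + 1 + m + i) (Q + 1 + m + j)]
    refine Finset.sum_congr rfl fun i hi => Finset.sum_congr rfl fun j hj => ?_
    rw [Finset.mem_range] at hi hj
    exact if_congr (by unfold bugAdj; omega) rfl rfl
  have hCC : (∑ i ∈ Finset.range m, ∑ j ∈ Finset.range m,
      if bugAdj m Q (Q + 1 + i) (Q + 1 + j) then g (Q + 1 + i) (Q + 1 + j) else 0) =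
      ∑ k ∈ Finset.range m, ∑ l ∈ Finset.range m,
      if k ≠ l then g (Q + 1 + k) (Q + 1 + l) else 0 := by
    refine Finset.sum_congr rfl fun i hi => Finset.sum_congr rfl fun j hj => ?_
    rw [Finset.mem_range] at hi hj
    exact if_congr (by unfold bugAdj; omega) rfl rfl
  have hLR : (∑ i ∈ Finset.range (Q + 1), ∑ j ∈ Finset.range (R + 1),
      if bugAdj m Q i (Q + 1 + m + j) then g i (Q + 1 + m + j) else 0) = 0 := by
    refine Finset.sum_eq_zero fun i hi => Finset.sum_eq_zero fun j hj => ?_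
    rw [Finset.mem_range] at hi hj
    exact if_neg (by unfold bugAdj; omega)
  have hRL : (∑ i ∈ Finset.range (R + 1), ∑ j ∈ Finset.range (Q + 1),
      if bugAdj m Q (Q + 1 + m + i) j then g (Q + 1 + m + i) j else 0) = 0 := by
    refine Finset.sum_eq_zero fun i hi => Finset.sum_eq_zero fun j hj => ?_
    rw [Finset.mem_range] at hi hj
    exact if_neg (by unfold bugAdj; omega)
  have hCL : (∑ i ∈ Finset.range m, ∑ j ∈ Finset.range (Q + 1),
      if bugAdj m Q (Q + 1 + i) j then g (Q + 1 + i) j else 0) =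
      ∑ k ∈ Finset.range m, g (Q + 1 + k) Q := by
    refine Finset.sum_congr rfl fun i hi => ?_
    rw [Finset.mem_range] at hi
    rw [Finset.sum_range_succ, Finset.sum_eq_zero, if_pos (by unfold bugAdj; omega), zero_add]
    intro j hj
    rw [Finset.mem_range] at hj
    exact if_neg (by unfold bugAdj; omega)
  have hLC : (∑ i ∈ Finset.range (Q + 1), ∑ j ∈ Finset.range m,
      if bugAdj m Q i (Q + 1 + j) then g i (Q + 1 + j) else 0) =
      ∑ k ∈ Finset.range m, g Q (Q + 1 + k) := by
    rw [Finset.sum_comm]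
    refine Finset.sum_congr rfl fun i hi => ?_
    rw [Finset.mem_range] at hi
    rw [Finset.sum_range_succ, Finset.sum_eq_zero, if_pos (by unfold bugAdj; omega), zero_add]
    intro j hj
    rw [Finset.mem_range] at hj
    exact if_neg (by unfold bugAdj; omega)
  have hCR : (∑ i ∈ Finset.range m, ∑ j ∈ Finset.range (R + 1),
      if bugAdj m Q (Q + 1 + i) (Q + 1 + m + j) then g (Q + 1 + i) (Q + 1 + m + j) else 0) =
      ∑ k ∈ Finset.range m, g (Q + 1 + k) (Q + 1 + m) := by
    refine Finset.sum_congr rfl fun i hi => ?_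
    rw [Finset.mem_range] at hi
    rw [Finset.sum_range_succ', Finset.sum_eq_zero, if_pos (by unfold bugAdj; omega), zero_add]
    · rfl
    intro j hj
    exact if_neg (by unfold bugAdj; omega)
  have hRC : (∑ i ∈ Finset.range (R + 1), ∑ j ∈ Finset.range m,
      if bugAdj m Q (Q + 1 + m + i) (Q + 1 + j) then g (Q + 1 + m + i) (Q + 1 + j) else 0) =
      ∑ k ∈ Finset.range m, g (Q + 1 + m) (Q + 1 + k) := by
    rw [Finset.sum_comm]
    refine Finset.sum_congr rfl fun i hi => ?_
    rw [Finset.mem_range] at hi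
    rw [Finset.sum_range_succ', Finset.sum_eq_zero, if_pos (by unfold bugAdj; omega), zero_add]
    · rfl
    intro j hj
    exact if_neg (by unfold bugAdj; omega)
  simp only [Finset.sum_range_add _ (Q + 1 + m) (R + 1), Finset.sum_range_add _ (Q + 1) m,
    Finset.sum_add_distrib]
  rw [hLL, hLC, hLR, hCL, hCC, hCR, hRL, hRC, hRR]
  simp only [Finset.sum_add_distrib]
  ring

theorem bugVec_left (m Q : ℕ) (a b c : ℕ → ℝ) (i : ℕ) (hi : i ≤ Q) :
    bugVec m Q a b c i = a (Q - i) := if_pos hi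

theorem bugVec_center (m Q : ℕ) (a b c : ℕ → ℝ) (k : ℕ) (hk : k < m) :
    bugVec m Q a b c (Q + 1 + k) = c k := by
  unfold bugVec
  rw [if_neg (by omega), if_pos (by omega)]
  congr 1
  omega

theorem bugVec_right (m Q : ℕ) (a b c : ℕ → ℝ) (k : ℕ) :
    bugVec m Q a b c (Q + 1 + m + k) = b k := by
  unfold bugVec
  rw [if_neg (by omega), if_neg (by omega)]
  congr 1
  omega

theorem bugForm_eq (α : ℝ) (m Q R : ℕ) (za zb zc a b c : ℕ → ℝ) :
    (∑ i ∈ Finset.range (Q + 1 + m + (R + 1)), ∑ j ∈ Finset.range (Q + 1 + m + (R + 1)),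
      if bugAdj m Q i j then bugVec m Q za zb zc i *
        (α * bugVec m Q a b c i + (1 - α) * bugVec m Q a b c j) else 0) =
    bugForm α m Q R za zb zc a b c := by
  rw [sum_bugAdj m Q R fun i j => bugVec m Q za zb zc i *
        (α * bugVec m Q a b c i + (1 - α) * bugVec m Q a b c j)]
  unfold bugForm
  congr 1
  · congr 1
    · congr 1
      · rw [← Finset.sum_range_reflect (fun i => edgeForm α (za i) (za (i + 1)) (a i) (a (i + 1)))]
        refine Finset.sum_congr rfl fun i hi => ?_
        rw [Finset.mem_range] at hi
        rw [bugVec_left m Q za zb zc i (by omega), bugVec_left m Q za zb zc (i + 1) (by omega),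
          bugVec_left m Q a b c i (by omega), bugVec_left m Q a b c (i + 1) (by omega)]
        rw [show Q - i = Q - 1 - i + 1 by omega, show Q - (i + 1) = Q - 1 - i by omega]
        unfold edgeForm
        ring
      · refine Finset.sum_congr rfl fun i hi => ?_
        simp only [bugVec_right]
        unfold edgeForm
        ring
    · refine Finset.sum_congr rfl fun k hk => ?_
      rw [Finset.mem_range] at hk
      have h1 := fun a b c => bugVec_right m Q a b c 0
      have h2 := fun a b c => bugVec_center m Q a b c k hk
      have h3 := fun a b c => bugVec_left m Q a b c Q le_rfl
      simp only [add_zero, Nat.sub_self] at h1 h3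
      simp only [h1, h2, h3]
      unfold edgeForm
      ring
  · refine Finset.sum_congr rfl fun k hk => Finset.sum_congr rfl fun l hl => ?_
    rw [Finset.mem_range] at hk hl
    simp only [bugVec_center m Q _ _ _ k hk, bugVec_center m Q _ _ _ l hl]

theorem bugInner_eq (m Q R : ℕ) (za zb zc a b c : ℕ → ℝ) :
    (∑ i ∈ Finset.range (Q + 1 + m + (R + 1)), bugVec m Q za zb zc i * bugVec m Q a b c i) =
    bugInner m Q R za zb zc a b c := by
  rw [Finset.sum_range_add _ (Q + 1 + m) (R + 1), Finset.sum_range_add _ (Q + 1) m]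
  unfold bugInner
  have h1 : (∑ i ∈ Finset.range (Q + 1), bugVec m Q za zb zc i * bugVec m Q a b c i) =
      ∑ i ∈ Finset.range (Q + 1), za i * a i := by
    rw [← Finset.sum_range_reflect (fun i => za i * a i)]
    refine Finset.sum_congr rfl fun i hi => ?_
    rw [Finset.mem_range] at hi
    rw [bugVec_left m Q _ _ _ i (by omega), bugVec_left m Q _ _ _ i (by omega)]
    simp
  have h2 : (∑ k ∈ Finset.range m, bugVec m Q za zb zc (Q + 1 + k) * bugVec m Q a b c (Q + 1 + k)) =
      ∑ k ∈ Finset.range m, zc k * c k := by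
    refine Finset.sum_congr rfl fun k hk => ?_
    rw [Finset.mem_range] at hk
    simp only [bugVec_center m Q _ _ _ k hk]
  rw [h1, h2]
  simp only [bugVec_right]
  ring

theorem bugGraph_adj_iff (m Q R : ℕ) (i j : Fin (m + 2 + (Q + 1) + (R + 1) - 2)) :
    (bugGraph (m + 2) (Q + 1) (R + 1)).Adj i j ↔ bugAdj m Q i j := by
  simp only [bugGraph, SimpleGraph.fromRel_adj, bugAdj, ne_eq, Fin.ext_iff]
  omega

/-- `ρ_α(B_{m+2,Q+1,R+1})` is the maximum of the Rayleigh quotient of `bugForm`, attained at a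
nonnegative eigenvector. -/
theorem bug_perron {α : ℝ} (h0 : 0 ≤ α) (h1 : α ≤ 1) (m Q R : ℕ) :
    (∀ a b c : ℕ → ℝ, bugForm α m Q R a b c a b c ≤
      rhoAlpha α (bugGraph (m + 2) (Q + 1) (R + 1)) * bugInner m Q R a b c a b c) ∧
    ∃ a b c : ℕ → ℝ, (∀ i, 0 ≤ a i) ∧ (∀ i, 0 ≤ b i) ∧ (∀ i, 0 ≤ c i) ∧
      0 < bugInner m Q R a b c a b c ∧
      ∀ za zb zc : ℕ → ℝ, bugForm α m Q R za zb zc a b c =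
        rhoAlpha α (bugGraph (m + 2) (Q + 1) (R + 1)) * bugInner m Q R za zb zc a b c := by
  have hn : m + 2 + (Q + 1) + (R + 1) - 2 = Q + 1 + m + (R + 1) := by omega
  have hform : ∀ za zb zc a b c : ℕ → ℝ,
      (fun i : Fin (m + 2 + (Q + 1) + (R + 1) - 2) => bugVec m Q za zb zc i) ⬝ᵥ
        (Aalpha α (bugGraph (m + 2) (Q + 1) (R + 1))).mulVec (fun i => bugVec m Q a b c i) =
      bugForm α m Q R za zb zc a b c := by
    intro za zb zc a b c
    classical
    rw [dotProduct_Aalpha, ← bugForm_eq]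
    simp only [bugGraph_adj_iff]
    rw [← hn, ← Fin.sum_univ_eq_sum_range]
    refine Finset.sum_congr rfl fun i _ => ?_
    rw [← Fin.sum_univ_eq_sum_range (fun j => if bugAdj m Q i j then bugVec m Q za zb zc i *
        (α * bugVec m Q a b c i + (1 - α) * bugVec m Q a b c j) else 0)]
  have hinner : ∀ za zb zc a b c : ℕ → ℝ,
      (fun i : Fin (m + 2 + (Q + 1) + (R + 1) - 2) => bugVec m Q za zb zc i) ⬝ᵥ
        (fun i => bugVec m Q a b c i) = bugInner m Q R za zb zc a b c := by
    intro za zb zc a b c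
    rw [← bugInner_eq, ← hn, ← Fin.sum_univ_eq_sum_range]
    rfl
  have : Nonempty (Fin (m + 2 + (Q + 1) + (R + 1) - 2)) := ⟨⟨0, by omega⟩⟩
  obtain ⟨hray, x, hx0, hxne, hx⟩ := perron_frobenius _ (Aalpha_transpose α
    (bugGraph (m + 2) (Q + 1) (R + 1))) (Aalpha_nonneg h0 h1 _)
  refine ⟨fun a b c => ?_, ?_⟩
  · have := hray fun i => bugVec m Q a b c i
    rw [hform, hinner] at this
    exact this
  · let X : ℕ → ℝ := fun i => if h : i < m + 2 + (Q + 1) + (R + 1) - 2 then x ⟨i, h⟩ else 0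
    have hX0 : ∀ i, 0 ≤ X i := by
      intro i
      simp only [X]
      split_ifs
      exacts [hx0 _, le_rfl]
    have hxX : x = fun i : Fin _ => bugVec m Q (fun i => X (Q - i)) (fun i => X (Q + 1 + m + i))
        (fun i => X (Q + 1 + i)) i := by
      ext i
      have : x i = X i := by simp [X]
      rw [this]
      unfold bugVec
      split_ifs <;> congr 1 <;> omega
    refine ⟨fun i => X (Q - i), fun i => X (Q + 1 + m + i), fun i => X (Q + 1 + i),
      fun i => hX0 _, fun i => hX0 _, fun i => hX0 _, ?_, fun za zb zc => ?_⟩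
    · rw [← hinner, ← hxX]
      have := Matrix.dotProduct_star_self_pos_iff.2 hxne
      simpa using this
    · rw [← hinner, ← hform, ← hxX, hx, dotProduct_smul]
      rfl

/-! ### Comparison of `α`-indices through the bilinear form -/

theorem bugForm_swap (α : ℝ) (m Q R : ℕ) (za zb zc a b c : ℕ → ℝ) :
    bugForm α m Q R za zb zc a b c = bugForm α m R Q zb za zc b a c := by
  simp only [bugForm, Finset.sum_add_distrib]
  ring

theorem bugInner_swap (m Q R : ℕ) (za zb zc a b c : ℕ → ℝ) :
    bugInner m Q R za zb zc a b c = bugInner m R Q zb za zc b a c := by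
  simp only [bugInner]
  ring

/-- If the eigenvector `(a, b, c)` of one bug graph can be rearranged into a vector of another one
with the same norm and no smaller quadratic form, the `α`-index does not decrease. -/
theorem rho_le_of_form {α : ℝ} (h0 : 0 ≤ α) (h1 : α ≤ 1) {m Q R Q' R' : ℕ}
    {a b c a' b' : ℕ → ℝ} (hpos : 0 < bugInner m Q R a b c a b c)
    (heq : bugForm α m Q R a b c a b c =
      rhoAlpha α (bugGraph (m + 2) (Q + 1) (R + 1)) * bugInner m Q R a b c a b c)
    (hin : bugInner m Q' R' a' b' c a' b' c = bugInner m Q R a b c a b c)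
    (hform : bugForm α m Q R a b c a b c ≤ bugForm α m Q' R' a' b' c a' b' c) :
    rhoAlpha α (bugGraph (m + 2) (Q + 1) (R + 1)) ≤
      rhoAlpha α (bugGraph (m + 2) (Q' + 1) (R' + 1)) := by
  have h := (bug_perron h0 h1 m Q' R').1 a' b' c
  rw [hin] at h
  exact le_of_mul_le_mul_right (heq ▸ hform.trans h) hpos

theorem rho_comm_le {α : ℝ} (h0 : 0 ≤ α) (h1 : α ≤ 1) (m Q R : ℕ) :
    rhoAlpha α (bugGraph (m + 2) (Q + 1) (R + 1)) ≤
      rhoAlpha α (bugGraph (m + 2) (R + 1) (Q + 1)) := by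
  obtain ⟨-, a, b, c, -, -, -, hpos, heq⟩ := bug_perron h0 h1 m Q R
  exact rho_le_of_form (a' := b) (b' := a) h0 h1 hpos (heq a b c) (bugInner_swap ..)
    (bugForm_swap ..).le

/-! ### Splicing the two paths -/

/-- Given the values `a` (long path, from its root outwards) and `b` (short path), the path that
follows `a` up to index `k` and then continues with `b k, b (k + 1), …`. -/
def spliceA (k : ℕ) (a b : ℕ → ℝ) (i : ℕ) : ℝ := if i ≤ k then a i else b (i - 1)

/-- The partner of `spliceA k`: the path that follows `b` at the indices below `k` and then
continues with `a (k + 1), a (k + 2), …`. Together the two paths use every value once. -/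
def spliceB (k : ℕ) (a b : ℕ → ℝ) (i : ℕ) : ℝ := if i < k then b i else a (i + 1)

theorem spliceA_le {k i : ℕ} (h : i ≤ k) (a b : ℕ → ℝ) : spliceA k a b i = a i := if_pos h

theorem spliceA_gt (k i : ℕ) (a b : ℕ → ℝ) : spliceA k a b (k + 1 + i) = b (k + i) := by
  rw [spliceA, if_neg (by omega)]
  congr 1
  omega

theorem spliceB_lt {k i : ℕ} (h : i < k) (a b : ℕ → ℝ) : spliceB k a b i = b i := if_pos h

theorem spliceB_ge (k i : ℕ) (a b : ℕ → ℝ) : spliceB k a b (k + i) = a (k + 1 + i) := by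
  rw [spliceB, if_neg (by omega)]
  congr 1
  omega

/-- The quadratic form of a path with `n` edges and vertex values `a 0, …, a n`. -/
def pathForm (α : ℝ) (n : ℕ) (a : ℕ → ℝ) : ℝ :=
  ∑ i ∈ Finset.range n, edgeForm α (a i) (a (i + 1)) (a i) (a (i + 1))

theorem pathForm_split (α : ℝ) (k s : ℕ) (a : ℕ → ℝ) :
    pathForm α (k + 1 + s) a = pathForm α k a + edgeForm α (a k) (a (k + 1)) (a k) (a (k + 1)) +
      pathForm α s fun i => a (k + 1 + i) := by
  rw [pathForm, Finset.sum_range_add, Finset.sum_range_succ]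
  rfl

theorem pathForm_congr (α : ℝ) (n : ℕ) {a a' : ℕ → ℝ} (h : ∀ i ≤ n, a i = a' i) :
    pathForm α n a = pathForm α n a' := by
  refine Finset.sum_congr rfl fun i hi => ?_
  rw [Finset.mem_range] at hi
  rw [h i (by omega), h (i + 1) (by omega)]

theorem pathForm_spliceA (α : ℝ) (k s : ℕ) (a b : ℕ → ℝ) :
    pathForm α (k + 1 + s) (spliceA k a b) = pathForm α k a +
      edgeForm α (a k) (b k) (a k) (b k) + pathForm α s fun i => b (k + i) := by
  have h1 := spliceA_gt k 0 a b
  rw [add_zero, add_zero] at h1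
  rw [pathForm_split, pathForm_congr α k fun i hi => spliceA_le hi a b, spliceA_le le_rfl, h1]
  simp only [spliceA_gt]

theorem pathForm_spliceB (α : ℝ) (k t : ℕ) (a b : ℕ → ℝ) :
    pathForm α (k + 1 + t) (spliceB (k + 1) a b) = pathForm α k b +
      edgeForm α (b k) (a (k + 2)) (b k) (a (k + 2)) + pathForm α t fun i => a (k + 2 + i) := by
  have h1 := spliceB_ge (k + 1) 0 a b
  simp only [add_zero] at h1
  rw [pathForm_split, pathForm_congr α k fun i hi => spliceB_lt (by omega) a b,
    spliceB_lt (by omega), h1]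
  simp only [spliceB_ge]

/-- Splicing turns paths with `Q + 2` and `R + 1` vertices into paths with `R + 2` and `Q + 1`
vertices, and only permutes the values. -/
theorem bugInner_splice (m : ℕ) {k Q R : ℕ} (hR : k ≤ R + 1) (hQ : k ≤ Q) (a b c : ℕ → ℝ) :
    bugInner m (R + 1) Q (spliceA k a b) (spliceB k a b) c (spliceA k a b) (spliceB k a b) c =
    bugInner m (Q + 1) R a b c a b c := by
  obtain ⟨s, hs⟩ := Nat.exists_eq_add_of_le hR
  obtain ⟨t, rfl⟩ := Nat.exists_eq_add_of_le hQ
  have hA : ∑ i ∈ Finset.range (k + 1), spliceA k a b i * spliceA k a b i =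
      ∑ i ∈ Finset.range (k + 1), a i * a i := by
    refine Finset.sum_congr rfl fun i hi => ?_
    rw [Finset.mem_range] at hi
    rw [spliceA_le (by omega)]
  have hB : ∑ i ∈ Finset.range k, spliceB k a b i * spliceB k a b i =
      ∑ i ∈ Finset.range k, b i * b i := by
    refine Finset.sum_congr rfl fun i hi => ?_
    rw [spliceB_lt (Finset.mem_range.1 hi)]
  unfold bugInner
  rw [hs, show k + s + 1 = k + 1 + s by ring, show k + t + 1 + 1 = k + 1 + (t + 1) by ring,
    show k + t + 1 = k + (t + 1) by ring]
  rw [Finset.sum_range_add _ (k + 1) s, Finset.sum_range_add _ (k + 1) (t + 1),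
    Finset.sum_range_add _ k (t + 1), Finset.sum_range_add _ k s, hA, hB]
  simp only [spliceA_gt, spliceB_ge]
  ring

/-! ### Eigenvalue equations and lower bounds for the eigenvalue -/

theorem edgeForm_self (α s t : ℝ) :
    edgeForm α s t s t = α * (s ^ 2 + t ^ 2) + 2 * (1 - α) * (s * t) := by
  unfold edgeForm; ring

theorem sum_ne (m : ℕ) (α : ℝ) (c : ℕ → ℝ) :
    (∑ k ∈ Finset.range m, ∑ l ∈ Finset.range m,
      if k ≠ l then (1 : ℝ) * (α * c k + (1 - α) * c l) else 0) =
      (m - 1) * ∑ k ∈ Finset.range m, c k := by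
  have h : ∀ k ∈ Finset.range m, (∑ l ∈ Finset.range m,
      if k ≠ l then (1 : ℝ) * (α * c k + (1 - α) * c l) else 0) =
      m * (α * c k) + (1 - α) * (∑ l ∈ Finset.range m, c l) - c k := by
    intro k hk
    have h1 : ∀ l, (if k ≠ l then (1 : ℝ) * (α * c k + (1 - α) * c l) else 0) =
        (α * c k + (1 - α) * c l) - if k = l then c l else 0 := by
      intro l
      by_cases h : k = l
      · subst h; simp; ring
      · simp [h]
    simp only [h1, Finset.sum_sub_distrib, Finset.sum_add_distrib, Finset.sum_ite_eq, hk, if_true,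
      Finset.sum_const, Finset.card_range, nsmul_eq_mul, ← Finset.mul_sum]
  rw [Finset.sum_congr rfl h]
  simp only [Finset.sum_sub_distrib, Finset.sum_add_distrib, Finset.sum_const, Finset.card_range,
    nsmul_eq_mul, ← Finset.mul_sum]
  ring

theorem edgeForm_nonneg {α s t s' t' : ℝ} (h0 : 0 ≤ α) (h1 : α ≤ 1) (hs : 0 ≤ s) (ht : 0 ≤ t)
    (hs' : 0 ≤ s') (ht' : 0 ≤ t') : 0 ≤ edgeForm α s t s' t' := by
  have : 0 ≤ 1 - α := by linarith
  unfold edgeForm; positivity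

/-- Rayleigh quotient of the indicator of the `m` clique vertices other than `u` and `v`. -/
theorem rho_ge_center {α : ℝ} (h0 : 0 ≤ α) (h1 : α ≤ 1) {m : ℕ} (hm : 2 ≤ m) (Q R : ℕ) :
    α * (m + 1) + (1 - α) ≤ rhoAlpha α (bugGraph (m + 2) (Q + 1) (R + 1)) := by
  have h := (bug_perron h0 h1 m Q R).1 0 0 1
  have h2 := sum_ne m α 1
  have hm' : (2 : ℝ) ≤ m := by exact_mod_cast hm
  simp only [bugForm, bugInner, Pi.zero_apply, Pi.one_apply] at h h2
  rw [h2] at h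
  simp [edgeForm] at h
  have h3 : 2 * α + (m - 1) ≤ rhoAlpha α (bugGraph (m + 2) (Q + 1) (R + 1)) :=
    le_of_mul_le_mul_right (by linarith) (by linarith : (0 : ℝ) < m)
  nlinarith

/-- Rayleigh quotient of the indicator of the clique without `v`. -/
theorem rho_ge_two {α : ℝ} (h0 : 0 ≤ α) (h1 : α ≤ 1) {m : ℕ} (hm : 2 ≤ m) (Q R : ℕ) :
    2 ≤ rhoAlpha α (bugGraph (m + 2) (Q + 1) (R + 1)) := by
  have hm' : (2 : ℝ) ≤ m := by exact_mod_cast hm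
  have h := (bug_perron h0 h1 m Q R).1 (Pi.single 0 1) 0 1
  have h2 := sum_ne m α 1
  have h3 : 0 ≤ ∑ i ∈ Finset.range Q, edgeForm α ((Pi.single 0 1 : ℕ → ℝ) i)
      ((Pi.single 0 1 : ℕ → ℝ) (i + 1)) ((Pi.single 0 1 : ℕ → ℝ) i)
      ((Pi.single 0 1 : ℕ → ℝ) (i + 1)) := by
    have h4 : ∀ i, 0 ≤ (Pi.single 0 1 : ℕ → ℝ) i := fun i => by
      rw [Pi.single_apply]; split_ifs <;> simp
    exact Finset.sum_nonneg fun i _ => edgeForm_nonneg h0 h1 (h4 _) (h4 _) (h4 _) (h4 _)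
  simp only [bugForm, bugInner, Pi.zero_apply, Pi.one_apply] at h h2
  rw [h2] at h
  have h5 : (∑ i ∈ Finset.range (Q + 1), (Pi.single 0 1 : ℕ → ℝ) i * (Pi.single 0 1 : ℕ → ℝ) i) = 1
      := by simp [Pi.single_apply]
  rw [h5] at h
  set P := ∑ i ∈ Finset.range Q, edgeForm α ((Pi.single 0 1 : ℕ → ℝ) i)
      ((Pi.single 0 1 : ℕ → ℝ) (i + 1)) ((Pi.single 0 1 : ℕ → ℝ) i)
      ((Pi.single 0 1 : ℕ → ℝ) (i + 1))
  simp [edgeForm] at h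
  nlinarith

theorem sum_edgeForm_single (α : ℝ) (n i : ℕ) (a : ℕ → ℝ) :
    (∑ j ∈ Finset.range n, edgeForm α ((Pi.single i 1 : ℕ → ℝ) j)
      ((Pi.single i 1 : ℕ → ℝ) (j + 1)) (a j) (a (j + 1))) =
    (if i < n then α * a i + (1 - α) * a (i + 1) else 0) +
      if 1 ≤ i ∧ i ≤ n then α * a i + (1 - α) * a (i - 1) else 0 := by
  induction n with
  | zero =>
    rw [if_neg (by omega), if_neg (by omega)]; simp
  | succ n ih =>
    rw [Finset.sum_range_succ, ih]
    unfold edgeForm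
    simp only [Pi.single_apply]
    rcases lt_trichotomy i n with h | h | h
    · rw [if_pos h, if_pos (by omega : i < n + 1), if_neg (by omega : ¬ n = i),
        if_neg (by omega : ¬ n + 1 = i),
        if_congr (show 1 ≤ i ∧ i ≤ n ↔ 1 ≤ i ∧ i ≤ n + 1 by omega) rfl rfl]
      ring
    · subst h
      rw [if_neg (by omega), if_pos (by omega : i < i + 1), if_pos rfl,
        if_neg (by omega : ¬ i + 1 = i),
        if_congr (show 1 ≤ i ∧ i ≤ i ↔ 1 ≤ i ∧ i ≤ i + 1 by omega) rfl rfl]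
      ring
    · by_cases h' : i = n + 1
      · subst h'
        simp
      · rw [if_neg (by omega), if_neg (by omega), if_neg (by omega), if_neg (by omega),
          if_neg (by omega), if_neg (by omega)]
        ring

/-- The eigenvalue equation at the path vertex with value `a (i + 1)`, which is the end of the path
when `i + 1 = Q`. -/
theorem row_path {α l : ℝ} {m Q R : ℕ} {a b c : ℕ → ℝ}
    (h : ∀ za zb zc : ℕ → ℝ, bugForm α m Q R za zb zc a b c = l * bugInner m Q R za zb zc a b c)
    {i : ℕ} (hi : i + 1 ≤ Q) :
    l * a (i + 1) = (if i + 1 < Q then α * a (i + 1) + (1 - α) * a (i + 2) else 0) +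
      (α * a (i + 1) + (1 - α) * a i) := by
  have h1 := h (Pi.single (i + 1) 1) 0 0
  have h2 : (∑ j ∈ Finset.range (Q + 1), (Pi.single (i + 1) 1 : ℕ → ℝ) j * a j) = a (i + 1) := by
    simp [Pi.single_apply]; omega
  simp only [bugForm, bugInner, h2, sum_edgeForm_single] at h1
  simp [edgeForm, hi] at h1
  rw [← h1]

/-- The eigenvalue equation at the root `u`, for a path with at least one edge. -/
theorem row_root {α l : ℝ} {m Q R : ℕ} {a b c : ℕ → ℝ}
    (h : ∀ za zb zc : ℕ → ℝ, bugForm α m (Q + 1) R za zb zc a b c =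
      l * bugInner m (Q + 1) R za zb zc a b c) :
    l * a 0 = α * (m + 1) * a 0 + (1 - α) * ((∑ k ∈ Finset.range m, c k) + a 1) := by
  have h1 := h (Pi.single 0 1) 0 0
  have h2 : (∑ j ∈ Finset.range (Q + 1 + 1), (Pi.single 0 1 : ℕ → ℝ) j * a j) = a 0 := by
    simp [Pi.single_apply]
  simp only [bugForm, bugInner, h2, sum_edgeForm_single] at h1
  simp [edgeForm, Finset.sum_add_distrib, ← Finset.mul_sum] at h1
  rw [← h1]
  ring

/-- The sum of the eigenvalue equations over the clique vertices other than `u` and `v`. -/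
theorem row_center {α l : ℝ} {m Q R : ℕ} {a b c : ℕ → ℝ}
    (h : ∀ za zb zc : ℕ → ℝ, bugForm α m Q R za zb zc a b c =
      l * bugInner m Q R za zb zc a b c) :
    l * (∑ k ∈ Finset.range m, c k) = α * (m + 1) * (∑ k ∈ Finset.range m, c k) +
      (1 - α) * ((m - 1) * (∑ k ∈ Finset.range m, c k) + m * (a 0 + b 0)) := by
  have h1 := h 0 0 1
  have h2 := sum_ne m α c
  simp only [bugForm, bugInner, Pi.zero_apply, Pi.one_apply] at h1 h2
  rw [h2] at h1
  simp [edgeForm, Finset.sum_add_distrib, ← Finset.mul_sum] at h1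
  rw [← h1]
  ring

/-- The entries of a nonnegative eigenvector with eigenvalue at least `2` decrease along the path,
since they form a convex sequence seen from its free end; `t` is the distance to that end. -/
theorem path_antitone {α l : ℝ} {m Q R : ℕ} {a b c : ℕ → ℝ} (h1 : α < 1) (hl : 2 ≤ l)
    (ha : ∀ i, 0 ≤ a i)
    (h : ∀ za zb zc : ℕ → ℝ, bugForm α m Q R za zb zc a b c = l * bugInner m Q R za zb zc a b c)
    (t : ℕ) : ∀ i, i + 1 + t = Q → a (i + 1) ≤ a i := by
  have h1' : 0 < 1 - α := by linarith
  induction t with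
  | zero =>
    intro i hi
    have hr := row_path h (i := i) (by omega)
    rw [if_neg (by omega)] at hr
    refine le_of_mul_le_mul_left ?_ h1'
    nlinarith [ha (i + 1)]
  | succ t ih =>
    intro i hi
    have hr := row_path h (i := i) (by omega)
    rw [if_pos (by omega)] at hr
    have h2 : a (i + 2) ≤ a (i + 1) := ih (i + 1) (by omega)
    have h3 := mul_le_mul_of_nonneg_left h2 h1'.le
    refine le_of_mul_le_mul_left ?_ h1'
    nlinarith [ha (i + 1)]

/-- The value `A` at `u` is at most the sum `S` over the `m` clique vertices other than `u` and `v`.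
With `l = α(m+1) + (1-α)μ`, the two eigenvalue equations give
`(μ + 1) (mA - S) = m (A' - B) ≤ mA`, where `μ ≥ 1` and `m ≥ 2`. -/
theorem root_le_center {α l A A' B S m : ℝ} (h1 : α < 1) (hm : 2 ≤ m)
    (hl : α * (m + 1) + (1 - α) ≤ l) (hA : 0 ≤ A) (hB : 0 ≤ B) (hAA : A' ≤ A)
    (hu : l * A = α * (m + 1) * A + (1 - α) * (S + A'))
    (hc : l * S = α * (m + 1) * S + (1 - α) * ((m - 1) * S + m * (A + B))) : A ≤ S := by
  have h1' : 0 < 1 - α := by linarith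
  obtain ⟨μ, hμ⟩ : ∃ μ, l = α * (m + 1) + (1 - α) * μ :=
    ⟨(l - α * (m + 1)) / (1 - α), by field_simp; ring⟩
  subst hμ
  have hμ1 : 1 ≤ μ := by
    refine le_of_mul_le_mul_left ?_ h1'
    linarith
  have hu' : μ * A = S + A' := mul_left_cancel₀ h1'.ne' (by linarith)
  have hc' : μ * S = (m - 1) * S + m * (A + B) := mul_left_cancel₀ h1'.ne' (by linarith)
  have key : (μ + 1) * (m * A - S) = m * (A' - B) := by linear_combination m * hu' - hc'
  by_contra hlt
  push Not at hlt
  have h3 : m * A / 2 < m * A - S := by nlinarith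
  have h4 : 2 * (m * A - S) ≤ (μ + 1) * (m * A - S) :=
    mul_le_mul_of_nonneg_right (by linarith) (by nlinarith)
  have h5 : m * (A' - B) ≤ m * A := mul_le_mul_of_nonneg_left (by linarith) (by linarith)
  linarith

/-! ### Comparison of the quadratic forms -/

theorem bugForm_self (α : ℝ) (m Q R : ℕ) (a b c : ℕ → ℝ) :
    bugForm α m Q R a b c a b c = pathForm α Q a + pathForm α R b +
      (∑ k ∈ Finset.range m,
        (edgeForm α (c k) (a 0) (c k) (a 0) + edgeForm α (c k) (b 0) (c k) (b 0))) +
      ∑ k ∈ Finset.range m, ∑ l ∈ Finset.range m,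
        if k ≠ l then c k * (α * c k + (1 - α) * c l) else 0 := rfl

theorem sum_edgeForm_center (α : ℝ) (m : ℕ) (c : ℕ → ℝ) (t : ℝ) :
    ∑ k ∈ Finset.range m, edgeForm α (c k) t (c k) t = α * (∑ k ∈ Finset.range m, c k ^ 2) +
      m * (α * t ^ 2) + 2 * (1 - α) * (t * ∑ k ∈ Finset.range m, c k) := by
  simp only [edgeForm_self, mul_add, Finset.sum_add_distrib, Finset.sum_const, Finset.card_range,
    nsmul_eq_mul, Finset.mul_sum]
  congr 1
  refine Finset.sum_congr rfl fun k _ => ?_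
  ring

/-- Moving the tail `a (R + 2), …` from `a (R + 1)` to the free end `b R` of the short path. -/
theorem form_le_end {α : ℝ} (h0 : 0 ≤ α) (h1 : α ≤ 1) (m : ℕ) {Q R : ℕ} (hQR : R + 1 ≤ Q)
    {a b : ℕ → ℝ} (c : ℕ → ℝ) (ha : ∀ i, 0 ≤ a i) (h : a (R + 1) ≤ b R) :
    bugForm α m (Q + 1) R a b c a b c ≤
      bugForm α m (R + 1) Q (spliceA (R + 1) a b) (spliceB (R + 1) a b) c
        (spliceA (R + 1) a b) (spliceB (R + 1) a b) c := by
  obtain ⟨t, rfl⟩ := Nat.exists_eq_add_of_le hQR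
  rw [bugForm_self, bugForm_self, pathForm_spliceB,
    pathForm_congr α (R + 1) fun i hi => spliceA_le hi a b, spliceA_le (Nat.zero_le _),
    spliceB_lt (Nat.succ_pos _), show R + 1 + t + 1 = R + 1 + 1 + t by ring,
    pathForm_split α (R + 1) t, edgeForm_self, edgeForm_self]
  have h2 : 0 ≤ α * (b R ^ 2 - a (R + 1) ^ 2) :=
    mul_nonneg h0 (by nlinarith [ha (R + 1)])
  have h3 : 0 ≤ (1 - α) * ((b R - a (R + 1)) * a (R + 2)) :=
    mul_nonneg (by linarith) (mul_nonneg (by linarith) (ha _))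
  have e : R + 1 + 1 = R + 2 := rfl
  simp only [e]
  linarith

/-- Exchanging the tails of the two paths beyond `a (j + 1)` and `b j`. Degrees are preserved, and
the quadratic form changes by `2 (1 - α) (b j - a (j + 1)) (a (j + 2) - b (j + 1))`. -/
theorem form_le_cross {α : ℝ} (h1 : α ≤ 1) (m : ℕ) {Q R j : ℕ} (hQR : R + 1 ≤ Q)
    (hj : j < R) {a b : ℕ → ℝ} (c : ℕ → ℝ) (h : a (j + 1) ≤ b j) (h' : b (j + 1) ≤ a (j + 2)) :
    bugForm α m (Q + 1) R a b c a b c ≤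
      bugForm α m (R + 1) Q (spliceA (j + 1) a b) (spliceB (j + 1) a b) c
        (spliceA (j + 1) a b) (spliceB (j + 1) a b) c := by
  obtain ⟨s, rfl⟩ := Nat.exists_eq_add_of_le (show j + 1 ≤ R from hj)
  obtain ⟨t, rfl⟩ := Nat.exists_eq_add_of_le (show j + 1 ≤ Q by omega)
  rw [bugForm_self, bugForm_self, pathForm_spliceB, show j + 1 + s + 1 = j + 1 + 1 + s by ring,
    pathForm_spliceA, spliceA_le (Nat.zero_le _),
    spliceB_lt (Nat.succ_pos _), show j + 1 + t + 1 = j + 1 + 1 + t by ring,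
    pathForm_split α (j + 1) t, pathForm_split α j s]
  simp only [edgeForm_self α (a (j + 1)), edgeForm_self α (b j)]
  have h3 : 0 ≤ (1 - α) * ((b j - a (j + 1)) * (a (j + 2) - b (j + 1))) :=
    mul_nonneg (by linarith) (mul_nonneg (by linarith) (by linarith))
  have e : j + 1 + 1 = j + 2 := rfl
  simp only [e]
  linarith

/-- Shifting the clique one step along the long path: the missing edge of the clique becomes
`{a 0, a 1}`, and `b 0` is attached to `a 0` instead of the clique. -/
theorem form_le_root {α : ℝ} (h0 : 0 ≤ α) (h1 : α ≤ 1) {m : ℕ} (hm : 2 ≤ m) (Q R : ℕ)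
    {a b : ℕ → ℝ} (c : ℕ → ℝ) (hb : ∀ i, 0 ≤ b i) (h : b 0 ≤ a 1)
    (hS : a 0 ≤ ∑ k ∈ Finset.range m, c k) :
    bugForm α m (Q + 1) R a b c a b c ≤
      bugForm α m (R + 1) Q (spliceA 0 a b) (spliceB 0 a b) c
        (spliceA 0 a b) (spliceB 0 a b) c := by
  have hA := pathForm_spliceA α 0 R a b
  have hB : spliceB 0 a b = fun i => a (0 + 1 + i) := by
    ext i
    simpa using spliceB_ge 0 i a b
  have ha := pathForm_split α 0 Q a
  simp only [zero_add] at hA ha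
  rw [bugForm_self, bugForm_self, hB, spliceA_le le_rfl, add_comm R 1, hA, add_comm Q 1, ha]
  simp only [Finset.sum_add_distrib, sum_edgeForm_center]
  simp only [edgeForm_self, pathForm, Finset.range_zero, Finset.sum_empty, zero_add, add_zero]
  have hm' : (2 : ℝ) ≤ m := by exact_mod_cast hm
  have h2 : 0 ≤ (m - 1) * (α * (a 1 ^ 2 - b 0 ^ 2)) :=
    mul_nonneg (by linarith) (mul_nonneg h0 (by nlinarith [hb 0]))
  have h3 : 0 ≤ (1 - α) * ((a 1 - b 0) * ((∑ k ∈ Finset.range m, c k) - a 0)) :=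
    mul_nonneg (by linarith) (mul_nonneg (by linarith) (by linarith))
  linarith

/-- Moving one vertex from the longer to the shorter path does not decrease the `α`-index. -/
theorem rho_step {α : ℝ} (h0 : 0 ≤ α) (h1 : α < 1) {m : ℕ} (hm : 2 ≤ m) {Q R : ℕ}
    (hQR : R + 1 ≤ Q) :
    rhoAlpha α (bugGraph (m + 2) (Q + 1 + 1) (R + 1)) ≤
      rhoAlpha α (bugGraph (m + 2) (R + 1 + 1) (Q + 1)) := by
  obtain ⟨-, a, b, c, ha, hb, -, hpos, heq⟩ := bug_perron h0 h1.le m (Q + 1) R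
  have hm' : (2 : ℝ) ≤ m := by exact_mod_cast hm
  suffices H : ∃ k ≤ R + 1, bugForm α m (Q + 1) R a b c a b c ≤
      bugForm α m (R + 1) Q (spliceA k a b) (spliceB k a b) c
        (spliceA k a b) (spliceB k a b) c by
    obtain ⟨k, hk, hle⟩ := H
    exact rho_le_of_form h0 h1.le hpos (heq a b c) (bugInner_splice m hk (by omega) a b c) hle
  by_cases hend : a (R + 1) ≤ b R
  · exact ⟨R + 1, le_rfl, form_le_end h0 h1.le m hQR c ha hend⟩
  by_cases hroot : b 0 ≤ a 1
  · refine ⟨0, Nat.zero_le _, form_le_root h0 h1.le hm Q R c hb hroot ?_⟩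
    exact root_le_center h1 hm' (rho_ge_center h0 h1.le hm (Q + 1) R) (ha 0) (hb 0)
      (path_antitone h1 (rho_ge_two h0 h1.le hm (Q + 1) R) ha heq Q 0 (by omega))
      (row_root heq) (row_center heq)
  -- `a (j + 1) - b j` is negative at `j = 0` and positive at `j = R`, so it changes sign.
  by_contra hcon
  refine hend ?_
  have hall : ∀ j ≤ R, a (j + 1) ≤ b j := by
    intro j
    induction j with
    | zero => exact fun _ => (not_le.1 hroot).le
    | succ j ih =>
      intro hj
      by_contra hlt
      exact hcon ⟨j + 1, by omega,
        form_le_cross h1.le m hQR (by omega) c (ih (by omega)) (not_le.1 hlt).le⟩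
  exact hall R le_rfl

theorem rho_balanced {α : ℝ} (h0 : 0 ≤ α) (h1 : α < 1) {m : ℕ} (hm : 2 ≤ m) (q r : ℕ)
    (hr : 1 ≤ r) (hrq : r ≤ q) :
    rhoAlpha α (bugGraph (m + 2) q r) ≤
      rhoAlpha α (bugGraph (m + 2) ((q + r) / 2) ((q + r + 1) / 2)) := by
  induction q using Nat.strong_induction_on generalizing r with
  | _ q ih =>
    by_cases h : q ≤ r + 1
    · rw [show (q + r) / 2 = r by omega, show (q + r + 1) / 2 = q by omega]
      obtain ⟨Q, rfl⟩ := Nat.exists_eq_add_of_le' (hr.trans hrq)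
      obtain ⟨R, rfl⟩ := Nat.exists_eq_add_of_le' hr
      exact rho_comm_le h0 h1.le m Q R
    · have h2 := ih (q - 1) (by omega) (r + 1) (by omega) (by omega)
      rw [show q - 1 + (r + 1) = q + r by omega] at h2
      refine le_trans ?_ h2
      obtain ⟨Q, rfl⟩ := Nat.exists_eq_add_of_le' (show 2 ≤ q by omega)
      obtain ⟨R, rfl⟩ := Nat.exists_eq_add_of_le' hr
      exact (rho_step h0 h1 hm (by omega)).trans (rho_comm_le h0 h1.le m _ _)

/-- Let `α ∈ [0,1)` and `p ≥ 4`, `q ≥ 1`, `r ≥ 1`. Then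
`ρ_α(B_{p,q,r}) ≤ ρ_α(B_{p,⌊(q+r)/2⌋,⌈(q+r)/2⌉})`. -/
theorem bug_balanced_max (α : ℝ) (hα0 : 0 ≤ α) (hα1 : α < 1)
    (p q r : ℕ) (hp : 4 ≤ p) (hq : 1 ≤ q) (hr : 1 ≤ r) :
    rhoAlpha α (bugGraph p q r) ≤
      rhoAlpha α (bugGraph p ((q + r) / 2) ((q + r + 1) / 2)) := by
  obtain ⟨m, rfl⟩ := Nat.exists_eq_add_of_le' (show 2 ≤ p by omega)
  rcases le_total r q with h | h
  · exact rho_balanced hα0 hα1 (by omega) q r hr h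
  · have h2 := rho_balanced hα0 hα1 (show 2 ≤ m by omega) r q hq h
    rw [add_comm r q] at h2
    refine le_trans ?_ h2
    obtain ⟨Q, rfl⟩ := Nat.exists_eq_add_of_le' hq
    obtain ⟨R, rfl⟩ := Nat.exists_eq_add_of_le' hr
    exact rho_comm_le hα0 hα1.le m Q R
end
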